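/- Let 𝒬 be the set of odd primes p such that the Diophantine equation 8x^2 + 27y^2 = jp has a primitive solution for some j ∈ {1, 4, 8}. Then the Dirichlet density of 𝒬 equals 1/6; that is, the ratio (∑_{p ∈ 𝒬} p^{−s}) / (∑_{p prime} p^{−s}) tends to 1/6 as s tends to 1 from the right. -/

import Mathlib

open Filter Topology
/-- The set 𝒬 of odd primes `p` such that `8x² + 27y² = jp` has a primitive
solution for some `j ∈ {1, 4, 8}`. -/
def QSet : Set ℕ :=
  {p | p.Prime ∧ Odd p ∧ ∃ j ∈ ({1, 4, 8} : Set ℤ), ∃ x y : ℤ,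
    8 * x ^ 2 + 27 * y ^ 2 = j * p ∧ Int.gcd x y = 1}

/-!
The primes of `𝒬` are those represented by `x² + 54y²` or `2x² + 27y²`. Among the primes represented
by the norm forms `x² + 6y²` and `2x² + 3y²` of `ℚ(√-6)`, they are the ones on which a cubic
character is trivial. If `a(n)` are the coefficients of the theta series of that character, then for
every prime `p`
`3 · 1_𝒬(p) = a(p) + (1_{p ∤ 6} + (-6/p)) / 2`.
Since `∑_p (-6/p) p⁻ˢ` stays bounded as `s → 1⁺`, the density is `(1/3)(1/2)` as soon as
`∑_p a(p) p⁻ˢ = log |L(a, s)| + O(1)` stays bounded too, i.e. as soon as `L(a, 1) ≠ 0`.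
Here `a` is multiplicative with partial sums `O(√n)`, so `L(a, s)` is differentiable at `1`; a zero
there would give `3 ∑_{p ∈ 𝒬} p⁻ˢ ≤ ½ log (s - 1) + O(1) → -∞`, although the sum is nonnegative.
-/

/-- The homogeneous elements of `ℤ[√A, √-B]` for its grading by `ℤ/2`: an untwisted element stands
for `x + y√(-AB)` and a twisted one for `x√A + y√(-B)`. With both grades available, elements can
play the role of ideals of `ℤ[√(-AB)]` when the ideal above `A` generates the class group. -/
@[ext]
structure HomogElt (A B : ℤ) where
  /-- The degree of the element. -/
  twisted : Bool
  /-- The coefficient of `1`, respectively of `√A`. -/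
  x : ℤ
  /-- The coefficient of `√(-AB)`, respectively of `√(-B)`. -/
  y : ℤ
deriving DecidableEq

namespace HomogElt

section Arithmetic

variable {A B : ℤ} {a b c π : HomogElt A B} {p : ℤ}

instance : Mul (HomogElt A B) where
  mul
    | ⟨false, x, y⟩, ⟨false, u, v⟩ => ⟨false, x * u - A * B * (y * v), x * v + y * u⟩
    | ⟨false, x, y⟩, ⟨true, u, v⟩ => ⟨true, x * u - B * (y * v), x * v + A * (y * u)⟩
    | ⟨true, x, y⟩, ⟨false, u, v⟩ => ⟨true, x * u - B * (y * v), A * (x * v) + y * u⟩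
    | ⟨true, x, y⟩, ⟨true, u, v⟩ => ⟨false, A * (x * u) - B * (y * v), x * v + y * u⟩

instance : One (HomogElt A B) := ⟨⟨false, 1, 0⟩⟩

instance : IntCast (HomogElt A B) := ⟨fun c => ⟨false, c, 0⟩⟩

instance : Neg (HomogElt A B) := ⟨fun a => ⟨a.twisted, -a.x, -a.y⟩⟩

instance : Star (HomogElt A B) := ⟨fun a => ⟨a.twisted, a.x, -a.y⟩⟩

/-- The product of an element with its conjugate: the value of `X² + ABY²` or of `AX² + BY²`
according to the degree. -/
def norm : HomogElt A B → ℤ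
  | ⟨false, x, y⟩ => x ^ 2 + A * B * y ^ 2
  | ⟨true, x, y⟩ => A * x ^ 2 + B * y ^ 2

@[simp] lemma mk_false_mul_mk_false (x y u v : ℤ) :
    (⟨false, x, y⟩ * ⟨false, u, v⟩ : HomogElt A B) =
      ⟨false, x * u - A * B * (y * v), x * v + y * u⟩ := rfl

@[simp] lemma mk_false_mul_mk_true (x y u v : ℤ) :
    (⟨false, x, y⟩ * ⟨true, u, v⟩ : HomogElt A B) =
      ⟨true, x * u - B * (y * v), x * v + A * (y * u)⟩ := rfl

@[simp] lemma mk_true_mul_mk_false (x y u v : ℤ) :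
    (⟨true, x, y⟩ * ⟨false, u, v⟩ : HomogElt A B) =
      ⟨true, x * u - B * (y * v), A * (x * v) + y * u⟩ := rfl

@[simp] lemma mk_true_mul_mk_true (x y u v : ℤ) :
    (⟨true, x, y⟩ * ⟨true, u, v⟩ : HomogElt A B) =
      ⟨false, A * (x * u) - B * (y * v), x * v + y * u⟩ := rfl

lemma one_def : (1 : HomogElt A B) = ⟨false, 1, 0⟩ := rfl

lemma intCast_def (c : ℤ) : (c : HomogElt A B) = ⟨false, c, 0⟩ := rfl

@[simp] lemma neg_mk (d : Bool) (x y : ℤ) : -(⟨d, x, y⟩ : HomogElt A B) = ⟨d, -x, -y⟩ := rfl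

@[simp] lemma star_mk (d : Bool) (x y : ℤ) : star (⟨d, x, y⟩ : HomogElt A B) = ⟨d, x, -y⟩ := rfl

@[simp] lemma norm_mk_false (x y : ℤ) :
    norm (⟨false, x, y⟩ : HomogElt A B) = x ^ 2 + A * B * y ^ 2 := rfl

@[simp] lemma norm_mk_true (x y : ℤ) :
    norm (⟨true, x, y⟩ : HomogElt A B) = A * x ^ 2 + B * y ^ 2 := rfl

instance : CommMonoid (HomogElt A B) where
  mul_assoc := by
    rintro ⟨_ | _, x, y⟩ ⟨_ | _, u, v⟩ ⟨_ | _, z, w⟩ <;> ext <;> simp <;> ring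
  one_mul := by rintro ⟨_ | _, x, y⟩ <;> simp [one_def]
  mul_one := by rintro ⟨_ | _, x, y⟩ <;> simp [one_def]
  mul_comm := by rintro ⟨_ | _, x, y⟩ ⟨_ | _, u, v⟩ <;> ext <;> simp <;> ring

instance : HasDistribNeg (HomogElt A B) where
  neg_neg := by rintro ⟨_, x, y⟩; simp
  neg_mul := by rintro ⟨_ | _, x, y⟩ ⟨_ | _, u, v⟩ <;> ext <;> simp <;> ring
  mul_neg := by rintro ⟨_ | _, x, y⟩ ⟨_ | _, u, v⟩ <;> ext <;> simp <;> ring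

instance : StarMul (HomogElt A B) where
  star_involutive := by rintro ⟨_, x, y⟩; simp
  star_mul := by rintro ⟨_ | _, x, y⟩ ⟨_ | _, u, v⟩ <;> ext <;> simp <;> ring

lemma intCast_mul (c : ℤ) (a : HomogElt A B) : c * a = ⟨a.twisted, c * a.x, c * a.y⟩ := by
  obtain ⟨_ | _, x, y⟩ := a <;> simp [intCast_def]

lemma intCast_dvd_iff : (p : HomogElt A B) ∣ a ↔ p ∣ a.x ∧ p ∣ a.y := by
  constructor
  · rintro ⟨b, rfl⟩
    simp [intCast_mul]
  · rintro ⟨⟨u, hu⟩, v, hv⟩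
    exact ⟨⟨a.twisted, u, v⟩, by ext <;> simp [intCast_mul, hu, hv]⟩

lemma mul_star_self (a : HomogElt A B) : a * star a = a.norm := by
  obtain ⟨_ | _, x, y⟩ := a <;> ext <;> simp [intCast_def] <;> ring

@[simp] lemma norm_mul (a b : HomogElt A B) : norm (a * b) = norm a * norm b := by
  obtain ⟨_ | _, x, y⟩ := a <;> obtain ⟨_ | _, u, v⟩ := b <;> simp <;> ring

@[simp] lemma norm_one : norm (1 : HomogElt A B) = 1 := by simp [one_def]

@[simp] lemma norm_intCast (c : ℤ) : norm (c : HomogElt A B) = c ^ 2 := by simp [intCast_def]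

@[simp] lemma norm_star (a : HomogElt A B) : norm (star a) = norm a := by
  obtain ⟨_ | _, x, y⟩ := a <;> simp

@[simp] lemma norm_neg (a : HomogElt A B) : norm (-a) = norm a := by
  obtain ⟨_ | _, x, y⟩ := a <;> simp

lemma intCast_mul_left_cancel (hp : p ≠ 0) (h : p * a = p * b) : a = b := by
  simp only [intCast_mul, mk.injEq, mul_eq_mul_left_iff, hp, or_false] at h
  exact HomogElt.ext h.1 h.2.1 h.2.2

lemma mul_left_cancel_of_norm_ne_zero (ha : a.norm ≠ 0) (h : a * b = a * c) : b = c := by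
  apply intCast_mul_left_cancel ha
  rw [← mul_star_self, mul_comm a, mul_assoc, mul_assoc, h]

lemma dvd_of_norm_dvd_mul_star (hπ : π.norm ≠ 0) (h : (π.norm : HomogElt A B) ∣ a * star π) :
    π ∣ a := by
  obtain ⟨b, hb⟩ := h
  refine ⟨b, intCast_mul_left_cancel hπ ?_⟩
  rw [← mul_assoc, mul_right_comm, ← hb, mul_assoc, mul_comm (star π), mul_star_self, mul_comm]

lemma ne_neg_of_norm_ne_zero (h : a.norm ≠ 0) : a ≠ -a := by
  obtain ⟨_ | _, x, y⟩ := a <;> intro e <;> simp only [neg_mk, mk.injEq, true_and] at e <;>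
    obtain ⟨rfl, rfl⟩ : x = 0 ∧ y = 0 := by omega
  all_goals simp at h

lemma intCast_dvd_of_dvd_y (hp : Prime p) (hA : ¬ p ∣ A) (h : p ∣ a.norm) (hy : p ∣ a.y) :
    (p : HomogElt A B) ∣ a := by
  refine intCast_dvd_iff.2 ⟨?_, hy⟩
  have hy2 : p ∣ a.y ^ 2 := dvd_pow hy two_ne_zero
  obtain ⟨_ | _, x, y⟩ := a
  · exact hp.dvd_of_dvd_pow ((dvd_add_left (hy2.mul_left _)).1 h)
  · exact hp.dvd_of_dvd_pow
      ((hp.dvd_or_dvd ((dvd_add_left (hy2.mul_left _)).1 h)).resolve_left hA)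

/-- The product in question is `± y(π)² N(a) ± y(a)² N(π)`, up to factors of `A`. -/
lemma dvd_y_mul_star_mul_y_mul (hp : Prime p) (hA : ¬ p ∣ A) (hπ : p ∣ π.norm) (ha : p ∣ a.norm) :
    p ∣ (a * star π).y * (a * π).y := by
  obtain ⟨k, hk⟩ := hπ
  obtain ⟨l, hl⟩ := ha
  obtain ⟨_ | _, x, y⟩ := a <;> obtain ⟨_ | _, u, v⟩ := π <;>
    simp only [star_mk, norm_mk_false, norm_mk_true, mk_false_mul_mk_false, mk_false_mul_mk_true,
      mk_true_mul_mk_false, mk_true_mul_mk_true] at *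
  · exact ⟨y ^ 2 * k - v ^ 2 * l, by linear_combination y ^ 2 * hk - v ^ 2 * hl⟩
  · exact ⟨A * y ^ 2 * k - v ^ 2 * l, by linear_combination A * y ^ 2 * hk - v ^ 2 * hl⟩
  · exact ⟨y ^ 2 * k - A * v ^ 2 * l, by linear_combination y ^ 2 * hk - A * v ^ 2 * hl⟩
  · refine (hp.dvd_or_dvd (a := A) ?_).resolve_left hA
    exact ⟨y ^ 2 * k - v ^ 2 * l, by linear_combination y ^ 2 * hk - v ^ 2 * hl⟩

lemma dvd_or_star_dvd (hp : Prime p) (hA : ¬ p ∣ A) (hπ : π.norm = p) (ha : p ∣ a.norm) :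
    π ∣ a ∨ star π ∣ a := by
  have hπ0 : π.norm ≠ 0 := hπ ▸ hp.ne_zero
  rcases hp.dvd_or_dvd (dvd_y_mul_star_mul_y_mul hp hA hπ.symm.dvd ha) with h | h
  · refine .inl (dvd_of_norm_dvd_mul_star hπ0 ?_)
    rw [hπ]
    exact intCast_dvd_of_dvd_y hp hA (by simp [ha.mul_right]) h
  · refine .inr (dvd_of_norm_dvd_mul_star (by simpa) ?_)
    rw [norm_star, hπ, star_star]
    exact intCast_dvd_of_dvd_y hp hA (by simp [ha.mul_right]) h

lemma exists_dvd_sq_add (hp : Prime p) (h : p ∣ a.norm) (hy : ¬ p ∣ a.y) :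
    ∃ b, p ∣ b ^ 2 + A * B := by
  obtain ⟨r, t, hrt⟩ := (Prime.coprime_iff_not_dvd hp).2 hy
  obtain ⟨k, hk⟩ := h
  obtain ⟨_ | _, x, y⟩ := a <;> simp only [norm_mk_false, norm_mk_true] at hk hrt
  · exact ⟨t * x, t ^ 2 * k + A * B * r * (1 + t * y), by
      linear_combination t ^ 2 * hk - A * B * (1 + t * y) * hrt⟩
  · exact ⟨t * (A * x), A * t ^ 2 * k + A * B * r * (1 + t * y), by
      linear_combination A * t ^ 2 * hk - A * B * (1 + t * y) * hrt⟩

lemma norm_nonneg (hA : 0 ≤ A) (hB : 0 ≤ B) (a : HomogElt A B) : 0 ≤ a.norm := by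
  obtain ⟨_ | _, x, y⟩ := a <;> simp only [norm_mk_false, norm_mk_true] <;> positivity

lemma norm_eq_one_iff (hA : 1 < A) (hB : 1 < B) : a.norm = 1 ↔ a = 1 ∨ a = -1 := by
  refine ⟨fun h => ?_, by rintro (rfl | rfl) <;> simp⟩
  have two_mul_sq_le {C : ℤ} (hC : 1 < C) (z : ℤ) : 2 * z ^ 2 ≤ C * z ^ 2 := by
    gcongr
    exact hC
  obtain ⟨_ | _, x, y⟩ := a <;> simp only [norm_mk_false, norm_mk_true] at h
  · have hAB : 1 < A * B := by nlinarith
    obtain rfl : y = 0 := by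
      rw [← sq_eq_zero_iff]
      linarith [two_mul_sq_le hAB y, sq_nonneg x, sq_nonneg y]
    have hx : x = 1 ∨ x = -1 := sq_eq_one_iff.1 (by linarith)
    simpa [one_def] using hx
  · have hx : x = 0 := by
      rw [← sq_eq_zero_iff]
      linarith [two_mul_sq_le hA x, two_mul_sq_le hB y, sq_nonneg x, sq_nonneg y]
    have hy : y = 0 := by
      rw [← sq_eq_zero_iff]
      linarith [two_mul_sq_le hA x, two_mul_sq_le hB y, sq_nonneg x, sq_nonneg y]
    simp [hx, hy] at h

lemma abs_x_le_norm (hA : 0 < A) (hB : 0 ≤ B) (a : HomogElt A B) : |a.x| ≤ a.norm := by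
  have hle : |a.x| ≤ a.x ^ 2 := sq_abs a.x ▸ Int.le_self_sq |a.x|
  obtain ⟨_ | _, x, y⟩ := a <;> simp only [norm_mk_false, norm_mk_true] at *
  · nlinarith [mul_nonneg (mul_nonneg hA.le hB) (sq_nonneg y)]
  · nlinarith [sq_nonneg x, mul_nonneg hB (sq_nonneg y)]

lemma abs_y_le_norm (hA : 0 < A) (hB : 0 < B) (a : HomogElt A B) : |a.y| ≤ a.norm := by
  have hle : |a.y| ≤ a.y ^ 2 := sq_abs a.y ▸ Int.le_self_sq |a.y|
  obtain ⟨_ | _, x, y⟩ := a <;> simp only [norm_mk_false, norm_mk_true] at *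
  · nlinarith [mul_pos hA hB, sq_nonneg x, sq_nonneg y]
  · nlinarith [mul_nonneg hA.le (sq_nonneg x), sq_nonneg y]

lemma finite_norm_le (hA : 0 < A) (hB : 0 < B) (n : ℤ) :
    {a : HomogElt A B | a.norm ≤ n}.Finite := by
  have hinj : Function.Injective fun a : HomogElt A B => (a.twisted, a.x, a.y) :=
    fun a b h => by simpa [HomogElt.ext_iff] using h
  refine ((Set.finite_univ.prod ((Set.finite_Icc (-n) n).prod (Set.finite_Icc (-n) n))).preimage
    hinj.injOn).subset fun a ha => ?_
  exact ⟨Set.mem_univ _, abs_le.1 ((abs_x_le_norm hA hB.le a).trans ha),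
    abs_le.1 ((abs_y_le_norm hA hB a).trans ha)⟩

lemma eq_or_eq_neg_of_mul_eq_mul (hA : 1 < A) (hB : 1 < B) {b' c' : HomogElt A B}
    (hb : b'.norm = b.norm) (hc : c'.norm = c.norm) (hcop : IsCoprime b.norm c.norm)
    (h0 : b.norm ≠ 0) (h : b' * c' = b * c) : (b' = b ∧ c' = c) ∨ (b' = -b ∧ c' = -c) := by
  have hscaled : c.norm * (star b * b') = b.norm * (c * star c') := by
    calc (c.norm * (star b * b') : HomogElt A B) = c' * star c' * (star b * b') := by
          rw [mul_star_self, hc]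
      _ = star b * (b' * c') * star c' := by ac_rfl
      _ = b * star b * (c * star c') := by rw [h]; ac_rfl
      _ = b.norm * (c * star c') := by rw [mul_star_self]
  obtain ⟨ε, rfl⟩ : b ∣ b' := by
    apply dvd_of_norm_dvd_mul_star h0
    rw [mul_comm b']
    have hdvd := hscaled ▸ dvd_mul_right (b.norm : HomogElt A B) _
    simp only [intCast_mul, intCast_dvd_iff] at hdvd ⊢
    exact hdvd.imp hcop.dvd_of_dvd_mul_left hcop.dvd_of_dvd_mul_left
  have hε : ε.norm = 1 := mul_left_cancel₀ h0 (by simpa using hb)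
  rcases (norm_eq_one_iff hA hB).1 hε with rfl | rfl
  · exact .inl ⟨mul_one b, mul_left_cancel_of_norm_ne_zero h0 (by simpa using h)⟩
  · refine .inr ⟨by simp, mul_left_cancel_of_norm_ne_zero h0 ?_⟩
    rw [mul_neg, ← h, mul_neg_one, neg_mul, neg_neg]

lemma eq_star_pow_or_eq_neg_star_pow (hA : 1 < A) (hB : 1 < B) (hp : Prime p) (hpA : ¬ p ∣ A)
    (hπ : π.norm = p) {k : ℕ} (ha : a.norm = p ^ k) (hdvd : ¬ π ∣ a) :
    a = star π ^ k ∨ a = -star π ^ k := by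
  induction k generalizing a with
  | zero => simpa using (norm_eq_one_iff hA hB).1 (by simpa using ha)
  | succ k ih =>
    obtain ⟨b, rfl⟩ := (dvd_or_star_dvd hp hpA hπ (ha ▸ dvd_pow_self p k.succ_ne_zero)).resolve_left
      hdvd
    have hb : b.norm = p ^ k := by
      rw [norm_mul, norm_star, hπ, pow_succ'] at ha
      exact mul_left_cancel₀ hp.ne_zero ha
    rcases ih hb (fun h => hdvd (h.mul_left _)) with rfl | rfl
    · exact .inl (pow_succ' _ _).symm
    · exact .inr (by rw [mul_neg, pow_succ'])

end Arithmetic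

section Reduction

variable {A B a b c : ℤ}

/-- `(a, b; b, c)` is the Gram matrix, for the norm form, of two elements of the same degree. -/
def IsGram (A B a b c : ℤ) : Prop :=
  ∃ d x y z w, norm (⟨d, x, y⟩ : HomogElt A B) = a ∧ norm (⟨d, z, w⟩ : HomogElt A B) = c ∧
    norm (⟨d, x + z, y + w⟩ : HomogElt A B) = a + 2 * b + c

lemma IsGram.exists_norm_eq (h : IsGram A B a b c) : ∃ u : HomogElt A B, u.norm = a :=
  let ⟨d, x, y, _, _, hxy, _⟩ := h
  ⟨⟨d, x, y⟩, hxy⟩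

lemma IsGram.swap (h : IsGram A B a b c) : IsGram A B c b a := by
  obtain ⟨d, x, y, z, w, hxy, hzw, hadd⟩ := h
  exact ⟨d, z, w, x, y, hzw, hxy, by rw [add_comm z, add_comm w, hadd]; ring⟩

lemma IsGram.shift (h : IsGram A B a b c) (k : ℤ) :
    IsGram A B a (b + k * a) (c + 2 * k * b + k ^ 2 * a) := by
  obtain ⟨_ | _, x, y, z, w, hxy, hzw, hadd⟩ := h <;>
    simp only [norm_mk_false, norm_mk_true] at hxy hzw hadd
  · refine ⟨false, x, y, z + k * x, w + k * y, hxy, ?_, ?_⟩ <;> simp only [norm_mk_false]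
    · linear_combination (k ^ 2 - k) * hxy + (1 - k) * hzw + k * hadd
    · linear_combination (k ^ 2 + k) * hxy - k * hzw + (k + 1) * hadd
  · refine ⟨true, x, y, z + k * x, w + k * y, hxy, ?_, ?_⟩ <;> simp only [norm_mk_true]
    · linear_combination (k ^ 2 - k) * hxy + (1 - k) * hzw + k * hadd
    · linear_combination (k ^ 2 + k) * hxy - k * hzw + (k + 1) * hadd

lemma isGram_of_reduced (h : a * c - b ^ 2 = 6) (hb : |2 * b| ≤ a) (hac : a ≤ c) :
    IsGram 2 3 a b c := by
  have hb' := abs_le.1 hb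
  have ha2 : a ≤ 2 := by nlinarith [sq_le_sq' hb'.1 hb'.2]
  obtain rfl : b = 0 := by
    rcases eq_or_ne a 2 with rfl | ha
    · have : b = -1 ∨ b = 0 ∨ b = 1 := by omega
      rcases this with rfl | rfl | rfl <;> omega
    · omega
  obtain rfl | rfl : a = 1 ∨ a = 2 := by
    have : a ≠ 0 := by
      rintro rfl
      simp at h
    omega
  · exact ⟨false, 1, 0, 0, 1, by simp, by simp; linarith, by simp; linarith⟩
  · exact ⟨true, 1, 0, 0, 1, by simp, by simp; linarith, by simp; linarith⟩

lemma exists_abs_two_mul_sub_le (ha : 0 < a) (b : ℤ) : ∃ k, |2 * (b - k * a)| ≤ a := by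
  refine ⟨(2 * b + a) / (2 * a), abs_le.2 ?_⟩
  have hdiv := Int.emod_add_mul_ediv (2 * b + a) (2 * a)
  have hnonneg := Int.emod_nonneg (2 * b + a) (b := 2 * a) (by linarith)
  have hlt := Int.emod_lt_of_pos (2 * b + a) (b := 2 * a) (by linarith)
  constructor <;> linarith

lemma isGram_of_det_eq_six (ha : 0 < a) (h : a * c - b ^ 2 = 6) : IsGram 2 3 a b c := by
  induction hn : a.toNat using Nat.strong_induction_on generalizing a b c with
  | _ n ih =>
  obtain ⟨k, hk⟩ := exists_abs_two_mul_sub_le ha b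
  set b' := b - k * a with hb'
  set c' := c - 2 * k * b + k ^ 2 * a with hc'
  have hdet : a * c' - b' ^ 2 = 6 := by rw [hb', hc']; linear_combination h
  suffices hred : IsGram 2 3 a b' c' by
    convert hred.shift k using 1 <;> rw [hb'] <;> ring
  rcases le_or_gt a c' with hac | hac
  · exact isGram_of_reduced hdet hk hac
  · have hc'0 : 0 < c' := by nlinarith [sq_nonneg b']
    exact (ih c'.toNat (by omega) hc'0 (by linear_combination hdet) rfl).swap

lemma exists_norm_eq_of_dvd_sq_add_six (ha : 0 < a) (h : a ∣ b ^ 2 + 6) :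
    ∃ u : HomogElt 2 3, u.norm = a := by
  obtain ⟨c, hc⟩ := h
  exact (isGram_of_det_eq_six (b := b) (c := c) ha (by linear_combination -hc)).exists_norm_eq

end Reduction

section Factorisation

variable {a : HomogElt 2 3} {p m n : ℕ}

lemma not_intCast_dvd_two (hp : p.Prime) (hodd : Odd p) : ¬ (p : ℤ) ∣ 2 := by
  intro h
  have := Nat.le_of_dvd two_pos (Int.natCast_dvd_natCast.1 h)
  have := hp.two_le
  grind

lemma intCast_dvd_or_exists_norm_eq (hp : p.Prime) (hodd : Odd p) (h : (p : ℤ) ∣ a.norm) :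
    ((p : ℤ) : HomogElt 2 3) ∣ a ∨ ∃ π : HomogElt 2 3, π.norm = p ∧ π ∣ a := by
  have hp' := Nat.prime_iff_prime_int.1 hp
  have hp2 := not_intCast_dvd_two hp hodd
  by_cases hy : (p : ℤ) ∣ a.y
  · exact .inl (intCast_dvd_of_dvd_y hp' hp2 h hy)
  obtain ⟨b, hb⟩ := exists_dvd_sq_add hp' h hy
  obtain ⟨π, hπ⟩ := exists_norm_eq_of_dvd_sq_add_six (by exact_mod_cast hp.pos) hb
  rcases dvd_or_star_dvd hp' hp2 hπ h with hdvd | hdvd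
  · exact .inr ⟨π, hπ, hdvd⟩
  · exact .inr ⟨star π, by simpa, hdvd⟩

lemma exists_mul_eq_of_norm_eq_mul (hm : Odd m) (hmn : m.Coprime n) (ha : a.norm = m * n) :
    ∃ b c : HomogElt 2 3, b.norm = m ∧ c.norm = n ∧ b * c = a := by
  induction m using Nat.strong_induction_on generalizing a with
  | _ m ih =>
  rcases eq_or_ne m 1 with rfl | hm1
  · exact ⟨1, a, by simp, by simpa using ha, one_mul a⟩
  obtain ⟨q, hq, k, rfl⟩ := Nat.exists_prime_and_dvd hm1
  obtain ⟨hqodd, hkodd⟩ := Nat.odd_mul.1 hm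
  have hq0 : (q : ℤ) ≠ 0 := by exact_mod_cast hq.ne_zero
  rcases intCast_dvd_or_exists_norm_eq hq hqodd (a := a) (by simp [ha, mul_assoc])
    with ⟨b, rfl⟩ | ⟨π, hπ, b, rfl⟩
  · have hb : (q : ℤ) * b.norm = k * n := mul_left_cancel₀ hq0 (by
      simp only [norm_mul, norm_intCast, Nat.cast_mul] at ha
      linear_combination ha)
    obtain ⟨l, rfl⟩ : q ∣ k := by
      have hdvd : (q : ℤ) ∣ (k * n : ℕ) := ⟨b.norm, by simp [hb]⟩
      exact hmn.coprime_mul_right.dvd_of_dvd_mul_right (Int.natCast_dvd_natCast.1 hdvd)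
    have hlt : l < q * (q * l) := by
      have := hkodd.pos
      nlinarith [hq.two_le, Nat.pos_of_mul_pos_left this]
    obtain ⟨c, e, hc, he, hce⟩ := ih l hlt (Nat.odd_mul.1 hkodd).2
      hmn.coprime_mul_left.coprime_mul_left (a := b) (mul_left_cancel₀ hq0 (by
        rw [hb]; push_cast; ring))
    exact ⟨(q : ℤ) * c, e, by simp [hc]; ring, he, by rw [mul_assoc, hce]⟩
  · obtain ⟨c, e, hc, he, hce⟩ := ih k (by nlinarith [hq.two_le, hkodd.pos]) hkodd
      hmn.coprime_mul_left (a := b) (mul_left_cancel₀ hq0 (by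
        simp only [norm_mul, hπ, Nat.cast_mul] at ha
        linear_combination ha))
    exact ⟨π * c, e, by simp [hc, hπ], he, by rw [mul_assoc, hce]⟩

end Factorisation

section NormSets

open Finset

variable {a π : HomogElt 2 3} {p m n : ℕ}

/-- The finite set of elements of norm at most `n`. -/
noncomputable def normLE (n : ℕ) : Finset (HomogElt 2 3) :=
  (finite_norm_le two_pos three_pos n).toFinset

/-- The finite set of elements of norm `n`. -/
noncomputable def normEq (n : ℕ) : Finset (HomogElt 2 3) := {a ∈ normLE n | a.norm = n}

@[simp] lemma mem_normLE : a ∈ normLE n ↔ a.norm ≤ n := by simp [normLE]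

@[simp] lemma mem_normEq : a ∈ normEq n ↔ a.norm = n := by
  simpa [normEq] using le_of_eq

lemma normEq_one : normEq 1 = {1, -1} := by
  ext a
  simp [norm_eq_one_iff]

lemma card_filter_mul_eq (hm : Odd m) (hmn : m.Coprime n) (ha : a ∈ normEq (m * n)) :
    #{bc ∈ normEq m ×ˢ normEq n | bc.1 * bc.2 = a} = 2 := by
  obtain ⟨b, c, hb, hc, rfl⟩ :=
    exists_mul_eq_of_norm_eq_mul hm hmn (by simpa using mem_normEq.1 ha)
  have hb0 : b.norm ≠ 0 := by simp [hb, hm.pos.ne']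
  rw [card_eq_two]
  refine ⟨(b, c), (-b, -c), fun h => ne_neg_of_norm_ne_zero hb0 (congrArg Prod.fst h), ?_⟩
  ext ⟨b', c'⟩
  simp only [mem_filter, mem_product, mem_normEq, mem_insert, mem_singleton, Prod.mk.injEq]
  constructor
  · rintro ⟨⟨hb', hc'⟩, h⟩
    exact eq_or_eq_neg_of_mul_eq_mul (by norm_num) (by norm_num) (hb'.trans hb.symm)
      (hc'.trans hc.symm) (by rw [hb, hc]; exact Nat.isCoprime_iff_coprime.2 hmn) hb0 h
  · rintro (⟨rfl, rfl⟩ | ⟨rfl, rfl⟩) <;> simp [hb, hc]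

lemma sum_product_normEq_mul {R : Type*} [Semiring R] (hm : Odd m) (hmn : m.Coprime n)
    (f : HomogElt 2 3 → R) :
    ∑ bc ∈ normEq m ×ˢ normEq n, f (bc.1 * bc.2) = 2 * ∑ a ∈ normEq (m * n), f a := by
  have hmaps : ∀ bc ∈ normEq m ×ˢ normEq n, bc.1 * bc.2 ∈ normEq (m * n) := by
    simp +contextual
  rw [← sum_fiberwise_of_maps_to hmaps, mul_sum]
  refine sum_congr rfl fun a ha => ?_
  rw [sum_congr rfl fun bc hbc => congrArg f (mem_filter.1 hbc).2, sum_const,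
    card_filter_mul_eq hm hmn ha, nsmul_eq_mul, Nat.cast_ofNat]

lemma card_normEq_pow_le_of_norm_eq (hp : p.Prime) (hodd : Odd p) (hπ : π.norm = p) (k : ℕ) :
    #(normEq (p ^ k)) ≤ 2 * (k + 1) := by
  induction k with
  | zero => simpa [normEq_one] using card_le_two
  | succ k ih =>
    have hsub : normEq (p ^ (k + 1)) ⊆
        (normEq (p ^ k)).image (π * ·) ∪ {star π ^ (k + 1), -star π ^ (k + 1)} := by
      intro a ha
      simp only [mem_normEq, Nat.cast_pow] at ha
      by_cases hdvd : π ∣ a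
      · obtain ⟨b, rfl⟩ := hdvd
        refine mem_union_left _ (mem_image_of_mem _ (mem_normEq.2 ?_))
        rw [norm_mul, hπ, pow_succ'] at ha
        exact_mod_cast mul_left_cancel₀ (by exact_mod_cast hp.ne_zero) ha
      · refine mem_union_right _ ?_
        simpa using eq_star_pow_or_eq_neg_star_pow (by norm_num) (by norm_num)
          (Nat.prime_iff_prime_int.1 hp) (not_intCast_dvd_two hp hodd) hπ ha hdvd
    calc #(normEq (p ^ (k + 1)))
        ≤ #((normEq (p ^ k)).image (π * ·)) + #{star π ^ (k + 1), -star π ^ (k + 1)} :=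
          (card_le_card hsub).trans (card_union_le _ _)
      _ ≤ 2 * (k + 1) + 2 := add_le_add (card_image_le.trans ih) card_le_two
      _ = 2 * (k + 1 + 1) := by ring

lemma card_normEq_pow_le_of_forall_norm_ne (hp : p.Prime) (hodd : Odd p)
    (hinert : ∀ π : HomogElt 2 3, π.norm ≠ p) (k : ℕ) : #(normEq (p ^ k)) ≤ 2 := by
  induction k using Nat.twoStepInduction with
  | zero => simpa [normEq_one] using card_le_two
  | one => simp [filter_eq_empty_iff.2 fun a _ => hinert a, normEq]
  | more k ih _ =>
    refine (card_le_card fun a ha => ?_).trans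
      (card_image_le (s := normEq (p ^ k)) (f := (((p : ℤ) : HomogElt 2 3) * ·)) |>.trans ih)
    rw [mem_normEq] at ha
    obtain ⟨b, rfl⟩ | ⟨π, hπ, -⟩ :=
      intCast_dvd_or_exists_norm_eq hp hodd (a := a) (by simp [ha, pow_succ])
    · refine mem_image_of_mem _ (mem_normEq.2 ?_)
      have hp2 : (p : ℤ) ^ 2 ≠ 0 := by exact_mod_cast pow_ne_zero 2 hp.ne_zero
      apply mul_left_cancel₀ hp2
      simp only [norm_mul, norm_intCast, Nat.cast_pow] at ha ⊢
      rw [ha, pow_add, mul_comm]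
    · exact absurd hπ (hinert π)

lemma card_normEq_pow_le (hp : p.Prime) (hodd : Odd p) (k : ℕ) :
    #(normEq (p ^ k)) ≤ 2 * (k + 1) := by
  by_cases h : ∃ π : HomogElt 2 3, π.norm = p
  · obtain ⟨π, hπ⟩ := h
    exact card_normEq_pow_le_of_norm_eq hp hodd hπ k
  · push Not at h
    exact (card_normEq_pow_le_of_forall_norm_ne hp hodd h k).trans (by omega)

end NormSets

section Weight

open Finset

variable {a b : HomogElt 2 3}

/-- The exponent of the cubic character on elements of norm prime to `3`: it is trivial exactly on
the elements whose second coordinate is divisible by `3`. -/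
def cubicLog : HomogElt 2 3 → ZMod 3
  | ⟨false, x, y⟩ => x * y
  | ⟨true, x, y⟩ => -(x * y)

/-- `2 cos (2πt/3)`, the trace of the `t`-th power of a primitive cube root of unity. -/
def rotTrace (t : ZMod 3) : ℤ := if t = 0 then 2 else -1

/-- Twice the real part of the cubic character with exponent `cubicLog`, extended by zero to the
elements whose norm is not prime to `6`. -/
def weight (a : HomogElt 2 3) : ℤ := if Int.gcd a.norm 6 = 1 then rotTrace (cubicLog a) else 0

@[simp] lemma cubicLog_mk_false (x y : ℤ) : cubicLog ⟨false, x, y⟩ = x * y := rfl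

@[simp] lemma cubicLog_mk_true (x y : ℤ) : cubicLog ⟨true, x, y⟩ = -(x * y) := rfl

lemma rotTrace_add_rotTrace_sub (t u : ZMod 3) :
    rotTrace (t + u) + rotTrace (t - u) = rotTrace t * rotTrace u := by
  revert t u
  decide

lemma rotTrace_neg (t : ZMod 3) : rotTrace (-t) = rotTrace t := by
  revert t
  decide

lemma abs_weight_le (a : HomogElt 2 3) : |weight a| ≤ 2 := by
  unfold weight rotTrace
  split_ifs <;> norm_num

lemma cubicLog_neg (a : HomogElt 2 3) : cubicLog (-a) = cubicLog a := by
  obtain ⟨_ | _, x, y⟩ := a <;> simp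

lemma cubicLog_star (a : HomogElt 2 3) : cubicLog (star a) = -cubicLog a := by
  obtain ⟨_ | _, x, y⟩ := a <;> simp

lemma intCast_x_sq_eq_one (h : ¬ 3 ∣ a.norm) : (a.x : ZMod 3) ^ 2 = 1 := by
  have hx : (a.x : ZMod 3) ≠ 0 := by
    rw [Ne, ZMod.intCast_zmod_eq_zero_iff_dvd]
    contrapose! h
    have h3 : (3 : ℤ) ∣ a.x ^ 2 := dvd_pow h two_ne_zero
    obtain ⟨_ | _, x, y⟩ := a
    · exact dvd_add h3 ((dvd_mul_left 3 2).mul_right _)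
    · exact dvd_add (h3.mul_left _) (dvd_mul_right _ _)
  generalize (a.x : ZMod 3) = t at hx
  revert t
  decide

lemma cubicLog_mul (ha : ¬ 3 ∣ a.norm) (hb : ¬ 3 ∣ b.norm) :
    cubicLog (a * b) = cubicLog a + cubicLog b := by
  have hx := intCast_x_sq_eq_one ha
  have hu := intCast_x_sq_eq_one hb
  obtain ⟨_ | _, x, y⟩ := a <;> obtain ⟨_ | _, u, v⟩ := b <;>
    simp only [mk_false_mul_mk_false, mk_false_mul_mk_true, mk_true_mul_mk_false,
      mk_true_mul_mk_true, cubicLog_mk_false, cubicLog_mk_true] at *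
  all_goals
    push_cast
    generalize (x : ZMod 3) = x at *
    generalize (y : ZMod 3) = y
    generalize (u : ZMod 3) = u at *
    generalize (v : ZMod 3) = v
    clear ha hb
    revert x y u v
    decide

lemma weight_neg (a : HomogElt 2 3) : weight (-a) = weight a := by
  simp [weight, cubicLog_neg]

lemma weight_star (a : HomogElt 2 3) : weight (star a) = weight a := by
  simp [weight, cubicLog_star, rotTrace_neg]

lemma not_three_dvd_of_gcd_six_eq_one {n : ℤ} (h : Int.gcd n 6 = 1) : ¬ 3 ∣ n := by
  intro h3
  have := Int.dvd_coe_gcd h3 (show (3 : ℤ) ∣ 6 by norm_num)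
  rw [h] at this
  norm_num at this

lemma weight_mul_add_weight_mul_star (a b : HomogElt 2 3) :
    weight (a * b) + weight (a * star b) = weight a * weight b := by
  have hgcd : Int.gcd (a.norm * b.norm) 6 = 1 ↔ Int.gcd a.norm 6 = 1 ∧ Int.gcd b.norm 6 = 1 := by
    simp only [← Int.isCoprime_iff_gcd_eq_one, IsCoprime.mul_left_iff]
  simp only [weight, norm_mul, norm_star, hgcd]
  by_cases h : Int.gcd a.norm 6 = 1 ∧ Int.gcd b.norm 6 = 1
  · have ha3 := not_three_dvd_of_gcd_six_eq_one h.1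
    have hb3 := not_three_dvd_of_gcd_six_eq_one h.2
    rw [if_pos h, if_pos h, if_pos h.1, if_pos h.2, cubicLog_mul ha3 hb3,
      cubicLog_mul ha3 (by simpa), cubicLog_star, ← sub_eq_add_neg, rotTrace_add_rotTrace_sub]
  · rw [if_neg h, if_neg h]
    rcases not_and_or.1 h with h | h <;> simp [h]

end Weight

end HomogElt

section Periodic

open Finset

variable {E : Type*} [SeminormedAddCommGroup E] {h : ℤ → E} {T : ℕ} {M : ℝ}

lemma sum_range_add_eq_zero_of_periodic (hper : Function.Periodic h T)
    (hzero : ∑ i ∈ range T, h i = 0) (a : ℤ) : ∑ i ∈ range T, h (a + i) = 0 := by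
  have hshift : Function.Periodic (fun c : ℤ => ∑ i ∈ range T, h (c + i)) 1 := by
    intro c
    have hsucc := (sum_range_succ (fun i : ℕ => h (c + i)) T).symm.trans (sum_range_succ' _ T)
    rw [hper c, Nat.cast_zero, add_zero, add_left_inj] at hsucc
    simp only [hsucc, Nat.cast_add, Nat.cast_one, add_assoc, add_comm (1 : ℤ)]
  have hconst := (hshift.int_mul a).eq
  simpa [hzero] using hconst

lemma norm_sum_range_le_of_periodic (hper : Function.Periodic h T)
    (hzero : ∑ i ∈ range T, h i = 0) (hM : ∀ i, ‖h i‖ ≤ M) (hT : 0 < T) (a : ℤ) (n : ℕ) :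
    ‖∑ i ∈ range n, h (a + i)‖ ≤ T * M := by
  have hpartial : Function.Periodic (fun n => ∑ i ∈ range n, h (a + i)) T := by
    intro n
    simp only [sum_range_add, Nat.cast_add, ← add_assoc,
      sum_range_add_eq_zero_of_periodic hper hzero, add_zero]
  have hM0 : 0 ≤ M := (norm_nonneg _).trans (hM 0)
  rw [← hpartial.map_mod_nat]
  calc ‖∑ i ∈ range (n % T), h (a + i)‖ ≤ (n % T : ℕ) * M := by
        simpa using norm_sum_le_of_le (range (n % T)) fun i _ => hM (a + i)
    _ ≤ T * M := by
        gcongr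
        exact (Nat.mod_lt _ hT).le

lemma norm_sum_le_of_periodic_of_ordConnected (hper : Function.Periodic h T)
    (hzero : ∑ i ∈ range T, h i = 0) (hM : ∀ i, ‖h i‖ ≤ M) (hT : 0 < T) {s : Finset ℤ}
    (hs : (s : Set ℤ).OrdConnected) : ‖∑ i ∈ s, h i‖ ≤ T * M := by
  rcases s.eq_empty_or_nonempty with rfl | hne
  · have hM0 : 0 ≤ M := (norm_nonneg _).trans (hM 0)
    simp only [sum_empty, norm_zero]
    positivity
  · have hIcc : s = Icc (s.min' hne) (s.max' hne) := by
      ext i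
      rw [mem_Icc]
      exact ⟨fun hi => ⟨s.min'_le i hi, s.le_max' i hi⟩,
        fun hi => hs.out (s.min'_mem hne) (s.max'_mem hne) hi⟩
    rw [hIcc, Int.Icc_eq_finset_map, sum_map]
    simpa [add_comm] using norm_sum_range_le_of_periodic hper hzero hM hT _ _

end Periodic

namespace HomogElt

section Theta

open Finset

variable {p m n : ℕ}

/-- The coefficients of the theta series attached to the cubic character of `cubicLog`. The `4`
accounts for the two units `±1` and for `weight` being twice a real part. -/
noncomputable def thetaCoeff (n : ℕ) : ℝ := (∑ a ∈ normEq n, weight a : ℤ) / 4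

lemma thetaCoeff_one : thetaCoeff 1 = 1 := by
  have hne : (1 : HomogElt 2 3) ≠ -1 := ne_neg_of_norm_ne_zero (by simp)
  have hweight : weight 1 = 2 := by decide
  norm_num [thetaCoeff, normEq_one, sum_pair hne, weight_neg, hweight]

lemma thetaCoeff_eq_zero (hn : ¬ n.Coprime 6) : thetaCoeff n = 0 := by
  have hzero : ∀ a ∈ normEq n, weight a = 0 := by
    intro a ha
    rw [weight, mem_normEq.1 ha, if_neg]
    exact_mod_cast hn
  rw [thetaCoeff, sum_eq_zero hzero, Int.cast_zero, zero_div]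

lemma sum_weight_mul_star (m n : ℕ) :
    ∑ bc ∈ normEq m ×ˢ normEq n, weight (bc.1 * star bc.2) =
      ∑ bc ∈ normEq m ×ˢ normEq n, weight (bc.1 * bc.2) :=
  sum_nbij' (fun bc => (bc.1, star bc.2)) (fun bc => (bc.1, star bc.2)) (by simp) (by simp)
    (by simp) (by simp) (by simp)

lemma thetaCoeff_mul_of_odd (hm : Odd m) (hmn : m.Coprime n) :
    thetaCoeff (m * n) = thetaCoeff m * thetaCoeff n := by
  have hsum : (∑ a ∈ normEq m, weight a) * ∑ a ∈ normEq n, weight a =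
      4 * ∑ a ∈ normEq (m * n), weight a := by
    rw [sum_mul_sum, ← sum_product']
    simp_rw [← weight_mul_add_weight_mul_star]
    rw [sum_add_distrib, sum_weight_mul_star, sum_product_normEq_mul hm hmn]
    ring
  have hsum' := congrArg (Int.cast : ℤ → ℝ) hsum
  push_cast at hsum'
  simp only [thetaCoeff]
  push_cast
  linarith

lemma thetaCoeff_mul (hmn : m.Coprime n) :
    thetaCoeff (m * n) = thetaCoeff m * thetaCoeff n := by
  rcases m.even_or_odd with hm | hm
  · have hn : Odd n := by
      rw [← Nat.not_even_iff_odd]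
      exact fun hn => Nat.not_coprime_of_dvd_of_dvd one_lt_two hm.two_dvd hn.two_dvd hmn
    rw [mul_comm m, thetaCoeff_mul_of_odd hn hmn.symm, mul_comm]
  · exact thetaCoeff_mul_of_odd hm hmn

lemma abs_thetaCoeff_le (n : ℕ) : |thetaCoeff n| ≤ #(normEq n) / 2 := by
  have hsum : |∑ a ∈ normEq n, weight a| ≤ #(normEq n) * 2 := by
    simpa using (abs_sum_le_sum_abs _ _).trans (sum_le_card_nsmul _ _ _ fun a _ => abs_weight_le a)
  rw [thetaCoeff, abs_div, ← Int.cast_abs]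
  have hcast : ((|∑ a ∈ normEq n, weight a| : ℤ) : ℝ) ≤ #(normEq n) * 2 := by exact_mod_cast hsum
  rw [show |(4 : ℝ)| = 4 by norm_num]
  linarith

lemma abs_thetaCoeff_prime_pow_le (hp : p.Prime) (k : ℕ) : |thetaCoeff (p ^ k)| ≤ k + 1 := by
  rcases hp.eq_two_or_odd' with rfl | hodd
  · rcases k with _ | k
    · simp [thetaCoeff_one]
    · have hcop : ¬ (2 ^ (k + 1)).Coprime 6 := by
        rw [Nat.coprime_pow_left_iff k.succ_pos]
        decide
      rw [thetaCoeff_eq_zero hcop, abs_zero]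
      positivity
  · have hcard : (#(normEq (p ^ k)) : ℝ) ≤ 2 * (k + 1) := by
      exact_mod_cast card_normEq_pow_le hp hodd k
    linarith [abs_thetaCoeff_le (p ^ k)]

end Theta

section PartialSums

open Finset

variable {x y x' y' : ℤ} {d : Bool} {n : ℕ}

lemma weight_congr (hx : x ≡ x' [ZMOD 6]) (hy : y ≡ y' [ZMOD 6]) :
    weight ⟨d, x, y⟩ = weight ⟨d, x', y'⟩ := by
  have h36 : (3 : ℤ) ∣ 6 := by norm_num
  have hx3 := (ZMod.intCast_eq_intCast_iff x x' 3).2 (hx.of_dvd h36)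
  have hy3 := (ZMod.intCast_eq_intCast_iff y y' 3).2 (hy.of_dvd h36)
  have hnorm : norm (⟨d, x, y⟩ : HomogElt 2 3) ≡ norm (⟨d, x', y'⟩ : HomogElt 2 3) [ZMOD 6] := by
    cases d <;> simp only [norm_mk_false, norm_mk_true] <;> gcongr
  have hlog : cubicLog ⟨d, x, y⟩ = cubicLog ⟨d, x', y'⟩ := by
    cases d <;> simp only [cubicLog_mk_false, cubicLog_mk_true, hx3, hy3]
  have gcd_congr {u v : ℤ} (h : u ≡ v [ZMOD 6]) : Int.gcd u 6 = Int.gcd v 6 := by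
    rw [← Int.gcd_emod, h.eq, Int.gcd_emod]
  simp only [weight, hlog, gcd_congr hnorm]

lemma weight_periodic (d : Bool) (x : ℤ) :
    Function.Periodic (fun y => (weight ⟨d, x, y⟩ : ℝ)) (6 : ℕ) := fun y =>
  congrArg Int.cast (weight_congr rfl (by simp [Int.ModEq]))

lemma sum_weight_period (d : Bool) (x : ℤ) : ∑ y ∈ range 6, (weight ⟨d, x, y⟩ : ℝ) = 0 := by
  suffices h : ∀ d, ∀ r ∈ range 6, ∑ y ∈ range 6, weight ⟨d, (r : ℤ), y⟩ = 0 by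
    obtain ⟨r, hr⟩ := Int.eq_ofNat_of_zero_le (Int.emod_nonneg x (b := 6) (by norm_num))
    have hr6 : r ∈ range 6 := by
      have := Int.emod_lt_of_pos x (b := 6) (by norm_num)
      exact mem_range.2 (by omega)
    have hx : x ≡ r [ZMOD 6] := hr ▸ (Int.mod_modEq x 6).symm
    simp only [weight_congr hx rfl]
    exact_mod_cast h d r hr6
  decide

lemma ordConnected_norm_mk_le (d : Bool) (x n : ℤ) :
    {y | norm (⟨d, x, y⟩ : HomogElt 2 3) ≤ n}.OrdConnected := by
  refine ⟨fun y hy z hz t ht => ?_⟩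
  have hsq : t ^ 2 ≤ y ^ 2 ∨ t ^ 2 ≤ z ^ 2 := by
    rcases le_total 0 t with h0 | h0
    · exact .inr (pow_le_pow_left₀ h0 ht.2 2)
    · exact .inl (sq_le_sq.2 (abs_le_abs_of_nonpos h0 ht.1))
  cases d <;> simp only [Set.mem_ofPred_eq, norm_mk_false, norm_mk_true] at * <;>
    rcases hsq with h | h <;> linarith

lemma abs_sum_weight_fiber_le (n : ℕ) (d : Bool) (x : ℤ) :
    |∑ a ∈ normLE n with (a.twisted, a.x) = (d, x), (weight a : ℝ)| ≤ 12 := by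
  set fiber := {a ∈ normLE n | (a.twisted, a.x) = (d, x)} with hfiber
  have hmk : ∀ a ∈ fiber, a = ⟨d, x, a.y⟩ := by
    rintro ⟨_, _, y⟩ ha
    simp only [hfiber, mem_filter, Prod.mk.injEq] at ha
    rw [ha.2.1, ha.2.2]
  have hsum : ∑ a ∈ fiber, (weight a : ℝ) = ∑ y ∈ fiber.image (·.y), (weight ⟨d, x, y⟩ : ℝ) := by
    rw [sum_image fun a ha b hb hab => by rw [hmk a ha, hmk b hb, hab]]
    exact sum_congr rfl fun a ha => by rw [← hmk a ha]
  have hset : (fiber.image (·.y) : Set ℤ) = {y | norm (⟨d, x, y⟩ : HomogElt 2 3) ≤ n} := by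
    ext y
    simp only [coe_image, Set.mem_image, SetLike.mem_coe, Set.mem_ofPred_eq]
    constructor
    · rintro ⟨a, ha, rfl⟩
      rw [← hmk a ha]
      exact mem_normLE.1 (mem_filter.1 ha).1
    · exact fun hy => ⟨⟨d, x, y⟩, by simpa [hfiber] using hy, rfl⟩
  rw [hsum]
  refine (norm_sum_le_of_periodic_of_ordConnected (weight_periodic d x) (sum_weight_period d x)
    (M := 2) (fun y => ?_) (by norm_num) (hset ▸ ordConnected_norm_mk_le d x n)).trans (by norm_num)
  rw [Real.norm_eq_abs, ← Int.cast_abs]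
  exact_mod_cast abs_weight_le _

lemma x_sq_le_norm (a : HomogElt 2 3) : a.x ^ 2 ≤ a.norm := by
  obtain ⟨_ | _, x, y⟩ := a <;> simp only [norm_mk_false, norm_mk_true] <;>
    nlinarith [sq_nonneg x, sq_nonneg y]

lemma abs_sum_weight_normLE_le (n : ℕ) :
    |∑ a ∈ normLE n, (weight a : ℝ)| ≤ 24 * (2 * n.sqrt + 1) := by
  have hmaps : ∀ a ∈ normLE n, (a.twisted, a.x) ∈
      (univ : Finset Bool) ×ˢ Icc (-(n.sqrt : ℤ)) n.sqrt := by
    intro a ha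
    have hle : a.x.natAbs ^ 2 ≤ n := by
      zify
      rw [sq_abs]
      exact (x_sq_le_norm a).trans (mem_normLE.1 ha)
    have hsqrt := Nat.le_sqrt'.2 hle
    simp only [mem_product, mem_univ, mem_Icc, true_and]
    omega
  rw [← sum_fiberwise_of_maps_to hmaps]
  calc _ ≤ #((univ : Finset Bool) ×ˢ Icc (-(n.sqrt : ℤ)) n.sqrt) • (12 : ℝ) :=
        (abs_sum_le_sum_abs _ _).trans
          (sum_le_card_nsmul _ _ _ fun dx _ => abs_sum_weight_fiber_le n dx.1 dx.2)
    _ = 24 * (2 * n.sqrt + 1) := by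
        have hcard : (n.sqrt + 1 - -(n.sqrt : ℤ)).toNat = 2 * n.sqrt + 1 := by omega
        rw [card_product, Int.card_Icc, hcard, card_univ, Fintype.card_bool, nsmul_eq_mul]
        push_cast
        ring

lemma sum_thetaCoeff_eq (n : ℕ) :
    ∑ k ∈ Icc 1 n, thetaCoeff k = (∑ a ∈ normLE n, (weight a : ℝ)) / 4 := by
  have hmaps : ∀ a ∈ normLE n, a.norm.toNat ∈ range (n + 1) := by
    intro a ha
    rw [mem_normLE] at ha
    simp only [mem_range]
    omega
  have hfiber : ∀ k ∈ range (n + 1), {a ∈ normLE n | a.norm.toNat = k} = normEq k := by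
    intro k hk
    rw [mem_range] at hk
    ext a
    have := norm_nonneg (by norm_num) (by norm_num) a
    simp only [mem_filter, mem_normLE, mem_normEq]
    omega
  have hzero : thetaCoeff 0 = 0 := thetaCoeff_eq_zero (by decide)
  calc ∑ k ∈ Icc 1 n, thetaCoeff k = ∑ k ∈ range (n + 1), thetaCoeff k := by
        rw [range_eq_Ico, sum_eq_sum_Ico_succ_bot n.succ_pos, hzero, zero_add]
        rfl
    _ = (∑ a ∈ normLE n, (weight a : ℝ)) / 4 := by
        rw [← sum_fiberwise_of_maps_to hmaps, sum_div]
        exact sum_congr rfl fun k hk => by rw [hfiber k hk, thetaCoeff, Int.cast_sum]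

lemma isBigO_sum_thetaCoeff :
    (fun n => ∑ k ∈ Icc 1 n, thetaCoeff k) =O[atTop] fun n => (n : ℝ) ^ (1 / 2 : ℝ) := by
  refine .of_bound 18 ?_
  filter_upwards [eventually_ge_atTop 1] with n hn
  have hn' : 1 ≤ √(n : ℝ) := Real.one_le_sqrt.2 (by exact_mod_cast hn)
  rw [sum_thetaCoeff_eq, ← Real.sqrt_eq_rpow, Real.norm_eq_abs, Real.norm_of_nonneg (by positivity),
    abs_div, abs_of_pos (by norm_num : (0 : ℝ) < 4)]
  linarith [abs_sum_weight_normLE_le n, Real.nat_sqrt_le_real_sqrt (a := n)]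

end PartialSums

section Primes

variable {A B p : ℤ} {a π : HomogElt A B}

lemma not_dvd_y_of_norm_eq (hp : Prime p) (hA : ¬ p ∣ A) (ha : a.norm = p) : ¬ p ∣ a.y := by
  intro hy
  obtain ⟨b, rfl⟩ := intCast_dvd_of_dvd_y hp hA ha.symm.dvd hy
  rw [norm_mul, norm_intCast] at ha
  exact hp.not_isUnit (hp.irreducible.squarefree p ⟨b.norm, by rw [← sq, ha]⟩)

lemma eq_or_eq_of_norm_eq (hA : 1 < A) (hB : 1 < B) (hp : Prime p) (hpA : ¬ p ∣ A)
    (hπ : π.norm = p) (ha : a.norm = p) : a = π ∨ a = -π ∨ a = star π ∨ a = -star π := by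
  have hassoc : ∀ {ρ : HomogElt A B}, ρ.norm = p → ρ ∣ a → a = ρ ∨ a = -ρ := by
    rintro ρ hρ ⟨b, rfl⟩
    rw [norm_mul, hρ] at ha
    rcases (norm_eq_one_iff hA hB).1 ((mul_eq_left₀ hp.ne_zero).1 ha) with rfl | rfl <;> simp
  rcases dvd_or_star_dvd hp hpA hπ ha.symm.dvd with h | h
  · exact (hassoc hπ h).imp_right .inl
  · exact .inr (.inr (hassoc ((norm_star π).trans hπ) h))

end Primes

section PrimeCoefficients

open Finset

variable {a π : HomogElt 2 3} {p : ℕ}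

lemma cubicLog_eq_zero_iff (h : ¬ 3 ∣ a.norm) : cubicLog a = 0 ↔ 3 ∣ a.y := by
  have hx : (a.x : ZMod 3) ≠ 0 := by
    rintro hx
    simpa [hx] using intCast_x_sq_eq_one h
  have hy : (a.y : ZMod 3) = 0 ↔ 3 ∣ a.y := ZMod.intCast_zmod_eq_zero_iff_dvd a.y 3
  rw [← hy]
  obtain ⟨_ | _, x, y⟩ := a <;> simp [hx]

lemma weight_eq_of_norm_eq (h6 : p.Coprime 6) (ha : a.norm = p) :
    weight a = if 3 ∣ a.y then 2 else -1 := by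
  have hgcd : Int.gcd a.norm 6 = 1 := by rw [ha]; exact_mod_cast h6
  simp only [weight, hgcd, rotTrace,
    cubicLog_eq_zero_iff (not_three_dvd_of_gcd_six_eq_one hgcd), if_true]

lemma x_ne_zero_of_norm_eq (h6 : p.Coprime 6) (ha : a.norm = p) : a.x ≠ 0 := by
  have h3 : ¬ 3 ∣ a.norm := not_three_dvd_of_gcd_six_eq_one (by rw [ha]; exact_mod_cast h6)
  intro hx
  simpa [hx] using intCast_x_sq_eq_one h3

lemma odd_of_coprime_six (h6 : p.Coprime 6) : Odd p :=
  Nat.coprime_two_right.1 (h6.coprime_dvd_right ⟨3, rfl⟩)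

lemma thetaCoeff_of_norm_eq (hp : p.Prime) (h6 : p.Coprime 6) (hπ : π.norm = p) :
    thetaCoeff p = if 3 ∣ π.y then 2 else -1 := by
  have hp' := Nat.prime_iff_prime_int.1 hp
  have hp2 : ¬ (p : ℤ) ∣ 2 := not_intCast_dvd_two hp (odd_of_coprime_six h6)
  have hx := x_ne_zero_of_norm_eq h6 hπ
  have hy : π.y ≠ 0 := fun h => not_dvd_y_of_norm_eq hp' hp2 hπ (h ▸ dvd_zero _)
  have hset : normEq p = {π, -π, star π, -star π} := by
    ext a
    simp only [mem_normEq, mem_insert, mem_singleton]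
    constructor
    · exact eq_or_eq_of_norm_eq one_lt_two (by norm_num) hp' hp2 hπ
    · rintro (rfl | rfl | rfl | rfl) <;> simp [hπ]
  have hsum : ∑ a ∈ normEq p, weight a = 4 * weight π := by
    rw [hset, sum_insert, sum_insert, sum_insert, sum_singleton, weight_neg, weight_neg,
      weight_star]
    · ring
    all_goals
      obtain ⟨d, x, y⟩ := π
      simp only [neg_mk, star_mk, mem_insert, mem_singleton, mk.injEq, true_and] at *
      omega
  rw [thetaCoeff, hsum, weight_eq_of_norm_eq h6 hπ]
  split_ifs <;> norm_num

end PrimeCoefficients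

section PrimitiveSolutions

variable {p : ℕ}

lemma isCoprime_of_squarefree_of_eq {n u v x y : ℤ} (hn : Squarefree n)
    (h : u * x ^ 2 + v * y ^ 2 = n) : IsCoprime x y := by
  refine IsRelPrime.isCoprime fun d hx hy => hn d ?_
  rw [← h, ← sq]
  exact dvd_add ((pow_dvd_pow_of_dvd hx 2).mul_left u) ((pow_dvd_pow_of_dvd hy 2).mul_left v)

lemma exists_norm_eq_of_mem_QSet (h : p ∈ QSet) :
    ∃ a : HomogElt 2 3, a.norm = p ∧ 3 ∣ a.y := by
  have two_dvd : ∀ {y : ℤ}, 2 ∣ 27 * y ^ 2 → 2 ∣ y := fun h =>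
    Int.prime_two.dvd_of_dvd_pow (n := 2) (by omega)
  obtain ⟨-, -, j, rfl | rfl | rfl, x, y, hxy, -⟩ := h
  · exact ⟨⟨true, 2 * x, 3 * y⟩, by rw [norm_mk_true]; linarith, dvd_mul_right 3 y⟩
  · obtain ⟨z, rfl⟩ := two_dvd (y := y) (by omega)
    exact ⟨⟨true, x, 3 * z⟩, by rw [norm_mk_true]; linarith, dvd_mul_right 3 z⟩
  · obtain ⟨z, rfl⟩ := two_dvd (y := y) (by omega)
    obtain ⟨w, rfl⟩ := two_dvd (y := z) (by rw [mul_pow] at hxy; omega)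
    exact ⟨⟨false, x, 3 * w⟩, by rw [norm_mk_false]; linarith, dvd_mul_right 3 w⟩

lemma mem_QSet_of_norm_eq (hp : p.Prime) (hodd : Odd p) {a : HomogElt 2 3} (ha : a.norm = p)
    (hy : 3 ∣ a.y) : p ∈ QSet := by
  refine ⟨hp, hodd, ?_⟩
  have hsq : Squarefree (p : ℤ) := Int.squarefree_natCast.2 hp.prime.squarefree
  have isCoprime_two : ∀ {x : ℤ}, ¬ 2 ∣ x → IsCoprime x 2 := fun h =>
    ((Prime.coprime_iff_not_dvd Int.prime_two).2 h).symm
  simp only [← Int.isCoprime_iff_gcd_eq_one]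
  obtain ⟨_ | _, x, y⟩ := a <;> obtain ⟨z, rfl : y = 3 * z⟩ := hy
  · rw [norm_mk_false] at ha
    have hx : IsCoprime x 2 := isCoprime_two fun h => by
      have : 2 ∣ x ^ 2 := dvd_pow h two_ne_zero
      grind
    have hxz : IsCoprime x z := isCoprime_of_squarefree_of_eq hsq (u := 1) (v := 54) (by linarith)
    exact ⟨8, by simp, x, 2 * (2 * z), by linarith, hx.mul_right (hx.mul_right hxz)⟩
  · rw [norm_mk_true] at ha
    have hxz : IsCoprime x z := isCoprime_of_squarefree_of_eq hsq (u := 2) (v := 27) (by linarith)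
    by_cases hx : 2 ∣ x
    · obtain ⟨u, rfl⟩ := hx
      exact ⟨1, by simp, u, z, by linarith, hxz.of_mul_left_right⟩
    · exact ⟨4, by simp, x, 2 * z, by linarith, (isCoprime_two hx).mul_right hxz⟩

lemma coprime_six_of_mem_QSet (h : p ∈ QSet) : p.Coprime 6 := by
  obtain ⟨a, ha, hy⟩ := exists_norm_eq_of_mem_QSet h
  have h3 : p ≠ 3 := by
    rintro rfl
    exact not_dvd_y_of_norm_eq Int.prime_three (by norm_num) ha hy
  exact ((Nat.coprime_two_right.2 h.2.1).mul_right ((Nat.coprime_primes h.1 Nat.prime_three).2 h3))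

lemma mem_QSet_iff_three_dvd_y (hp : p.Prime) (h6 : p.Coprime 6) {π : HomogElt 2 3}
    (hπ : π.norm = p) : p ∈ QSet ↔ 3 ∣ π.y := by
  have hodd := odd_of_coprime_six h6
  refine ⟨fun h => ?_, mem_QSet_of_norm_eq hp hodd hπ⟩
  obtain ⟨a, ha, hy⟩ := exists_norm_eq_of_mem_QSet h
  obtain ⟨d, x, y⟩ := π
  rcases eq_or_eq_of_norm_eq one_lt_two (by norm_num) (Nat.prime_iff_prime_int.1 hp)
    (not_intCast_dvd_two hp hodd) hπ ha with rfl | rfl | rfl | rfl <;> simpa using hy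

end PrimitiveSolutions

section Representability

variable {p : ℕ}

lemma exists_norm_eq_iff_jacobiSym (hp : p.Prime) (h6 : p.Coprime 6) :
    (∃ a : HomogElt 2 3, a.norm = p) ↔ jacobiSym (-6) p = 1 := by
  have : Fact p.Prime := ⟨hp⟩
  have hp' := Nat.prime_iff_prime_int.1 hp
  have h0 : ((-6 : ℤ) : ZMod p) ≠ 0 := by
    rw [Ne, ZMod.intCast_zmod_eq_zero_iff_dvd, Int.dvd_neg]
    intro h
    exact hp.one_lt.ne' (Nat.eq_one_of_dvd_coprimes h6 dvd_rfl (Int.natCast_dvd_natCast.1 h))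
  have hdvd : ∀ b : ℤ, (p : ℤ) ∣ b ^ 2 + 6 ↔ ((-6 : ℤ) : ZMod p) = b * b := fun b => by
    rw [← ZMod.intCast_zmod_eq_zero_iff_dvd]
    push_cast
    constructor <;> intro h <;> linear_combination (exp := 1) -h
  rw [← jacobiSym.legendreSym.to_jacobiSym, legendreSym.eq_one_iff p h0]
  constructor
  · rintro ⟨a, ha⟩
    obtain ⟨b, hb⟩ := exists_dvd_sq_add hp' ha.symm.dvd
      (not_dvd_y_of_norm_eq hp' (not_intCast_dvd_two hp (odd_of_coprime_six h6)) ha)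
    exact ⟨b, (hdvd b).1 hb⟩
  · rintro ⟨r, hr⟩
    obtain ⟨b, rfl⟩ := ZMod.intCast_surjective r
    exact exists_norm_eq_of_dvd_sq_add_six (by exact_mod_cast hp.pos) ((hdvd b).2 hr)

/-- The quadratic character modulo `24` attached to `ℚ(√-6)`. -/
def chiNegSix : MulChar (ZMod 24) ℤ where
  toFun a := if a ∈ ({1, 5, 7, 11} : Finset (ZMod 24)) then 1 else
    if a ∈ ({13, 17, 19, 23} : Finset (ZMod 24)) then -1 else 0
  map_one' := by decide
  map_mul' := by decide
  map_nonunit' := by decide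

lemma chiNegSix_ne_one : chiNegSix ≠ 1 := by
  intro h
  have h13 : chiNegSix 13 = 1 := by rw [h, MulChar.one_apply (by decide)]
  revert h13
  decide

lemma chiNegSix_natCast_eq_jacobiSym (h6 : p.Coprime 6) :
    chiNegSix p = jacobiSym (-6) p := by
  have hmod : (p % 24).Coprime 6 := (((Nat.mod_modEq p 24).of_dvd ⟨4, rfl⟩).gcd_eq).trans h6
  rw [jacobiSym.mod_right _ (odd_of_coprime_six h6), ← ZMod.natCast_mod]
  change chiNegSix (p % 24 : ℕ) = jacobiSym (-6) (p % 24)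
  have hlt := Nat.mod_lt p (show 0 < 24 by norm_num)
  generalize p % 24 = r at hmod hlt
  interval_cases r
  all_goals first | exact absurd hmod (by decide) | (norm_num <;> decide)

/-- The last summand is the indicator of the primes represented by a norm form; on these,
`thetaCoeff p` is `χ(π) + χ(π)⁻¹` for the cubic character `χ` and `π` of norm `p`. -/
lemma three_mul_indicator_QSet_eq (hp : p.Prime) :
    3 * QSet.indicator 1 p =
      thetaCoeff p + (((1 : MulChar (ZMod 24) ℤ) p : ℝ) + (chiNegSix p : ℝ)) / 2 := by
  by_cases h6 : p.Coprime 6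
  · have hunit : IsUnit (p : ZMod 24) := (ZMod.isUnit_iff_coprime p 24).2
      (((Nat.coprime_two_right.2 (odd_of_coprime_six h6)).pow_right 2).mul_right h6)
    rw [MulChar.one_apply hunit, chiNegSix_natCast_eq_jacobiSym h6]
    by_cases hrep : ∃ π : HomogElt 2 3, π.norm = p
    · classical
      rw [(exists_norm_eq_iff_jacobiSym hp h6).1 hrep]
      obtain ⟨π, hπ⟩ := hrep
      rw [thetaCoeff_of_norm_eq hp h6 hπ, Set.indicator_apply, mem_QSet_iff_three_dvd_y hp h6 hπ]
      split_ifs <;> norm_num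
    · have hjac : jacobiSym (-6) p = -1 := by
        have hne : jacobiSym (-6) p ≠ 0 := jacobiSym.ne_zero (by simpa [Int.gcd] using h6.symm)
        have := jacobiSym.trichotomy (-6) p
        rw [exists_norm_eq_iff_jacobiSym hp h6] at hrep
        tauto
      have htheta : thetaCoeff p = 0 := by
        rw [thetaCoeff, Finset.sum_eq_zero fun a ha => absurd ⟨a, mem_normEq.1 ha⟩ hrep]
        norm_num
      have hQ : p ∉ QSet := fun h => hrep ((exists_norm_eq_of_mem_QSet h).imp fun _ => And.left)
      rw [hjac, htheta, Set.indicator_of_notMem hQ]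
      norm_num
  · have hunit : ¬ IsUnit (p : ZMod 24) := fun h =>
      h6 (((ZMod.isUnit_iff_coprime p 24).1 h).coprime_dvd_right ⟨4, rfl⟩)
    rw [Set.indicator_of_notMem (fun h => h6 (coprime_six_of_mem_QSet h)),
      thetaCoeff_eq_zero h6, MulChar.map_nonunit _ hunit, MulChar.map_nonunit _ hunit]
    norm_num

end Representability

end HomogElt

section EulerProducts

/-- The prime zeta sum `∑ a(p) p ^ (-s)` with coefficients `a`. -/
noncomputable def primeSum (a : ℕ → ℝ) (s : ℝ) : ℝ := ∑' p : Nat.Primes, a p * (p : ℝ) ^ (-s)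

lemma tsum_rpow_eq_primeSum_indicator {S : Set ℕ} (hS : ∀ p ∈ S, p.Prime) (s : ℝ) :
    ∑' p : S, ((p : ℕ) : ℝ) ^ (-s) = primeSum (S.indicator 1) s := by
  refine (tsum_subtype S fun n : ℕ => (n : ℝ) ^ (-s)).trans <| Eq.trans (tsum_congr fun n => ?_)
    (tsum_subtype {p : ℕ | p.Prime} fun n : ℕ => S.indicator 1 n * (n : ℝ) ^ (-s)).symm
  by_cases hn : n ∈ S
  · simp [hn, hS n hn]
  · simp [hn, Set.indicator]

lemma summable_primeSum {a : ℕ → ℝ} {C s : ℝ} (ha : ∀ p : Nat.Primes, |a p| ≤ C) (hs : 1 < s) :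
    Summable fun p : Nat.Primes => a p * (p : ℝ) ^ (-s) := by
  refine ((Nat.Primes.summable_rpow.2 (neg_lt_neg hs)).mul_left C).of_norm_bounded fun p => ?_
  rw [norm_mul, Real.norm_rpow_of_nonneg (by positivity), Real.norm_natCast, Real.norm_eq_abs]
  gcongr
  exact ha p

lemma natCast_cpow_neg_ofReal (n : ℕ) (s : ℝ) :
    (n : ℂ) ^ (-s : ℂ) = (((n : ℝ) ^ (-s) : ℝ) : ℂ) := by
  rw [Complex.ofReal_cpow n.cast_nonneg, Complex.ofReal_neg, Complex.ofReal_natCast]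

lemma natCast_rpow_neg_lt_inv {n : ℕ} (hn : 1 < n) {s : ℝ} (hs : 1 < s) :
    (n : ℝ) ^ (-s) < (n : ℝ)⁻¹ := by
  rw [← Real.rpow_neg_one]
  exact Real.rpow_lt_rpow_of_exponent_lt (mod_cast hn) (neg_lt_neg hs)

lemma abs_log_norm_sub_tsum_re_le_of_hasProd {ι : Type*} {E z : ι → ℂ} {u : ι → ℝ} {L : ℂ}
    (hL : HasProd E L) (hE : ∀ i, E i ≠ 0) (hz : Summable z) (hu : Summable u)
    (hlog : ∀ i, ‖Complex.log (E i) - z i‖ ≤ u i) :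
    L ≠ 0 ∧ |Real.log ‖L‖ - ∑' i, (z i).re| ≤ ∑' i, u i := by
  have hdiff : Summable fun i => Complex.log (E i) - z i := hu.of_norm_bounded hlog
  obtain ⟨S, hS⟩ : Summable fun i => Complex.log (E i) := by simpa using hdiff.add hz
  have hexp : L = Complex.exp S := hL.unique (by
    simpa only [Function.comp_def, Complex.exp_log (hE _)] using hS.cexp)
  refine ⟨hexp ▸ Complex.exp_ne_zero S, ?_⟩
  rw [hexp, Complex.norm_exp, Real.log_exp, ← Complex.re_tsum hz, ← Complex.sub_re]
  refine (Complex.abs_re_le_norm _).trans ?_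
  rw [← hS.tsum_eq, ← hS.summable.tsum_sub hz]
  exact tsum_of_norm_bounded hu.hasSum hlog

lemma isBigO_log_norm_sub_primeSum_of_hasProd {f : ℕ → ℂ} {E : ℝ → Nat.Primes → ℂ} {L : ℝ → ℂ}
    {C D : ℝ} (hf : ∀ p : Nat.Primes, ‖f p‖ ≤ C) (hL : ∀ s > 1, HasProd (E s) (L s))
    (hE : ∀ s > 1, ∀ p : Nat.Primes, E s p ≠ 0 ∧
      ‖Complex.log (E s p) - f p * (p : ℂ) ^ (-s : ℂ)‖ ≤ D * ((p : ℝ) ^ (-s)) ^ 2) :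
    (∀ s > 1, L s ≠ 0) ∧ (fun s => Real.log ‖L s‖ - primeSum (fun n => (f n).re) s)
      =O[𝓝[>] 1] (1 : ℝ → ℝ) := by
  have hbound : ∀ s > 1, L s ≠ 0 ∧ |Real.log ‖L s‖ - primeSum (fun n => (f n).re) s| ≤
      ∑' p : Nat.Primes, |D| * (p : ℝ) ^ (-2 : ℝ) := by
    intro s hs
    have hz : Summable fun p : Nat.Primes => f p * (p : ℂ) ^ (-s : ℂ) := by
      refine Summable.of_norm ?_
      simp_rw [norm_mul, natCast_cpow_neg_ofReal, Complex.norm_real,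
        Real.norm_rpow_of_nonneg (Nat.cast_nonneg _), Real.norm_natCast]
      exact summable_primeSum (a := fun n => ‖f n‖) (by simpa using hf) hs
    have hu : Summable fun p : Nat.Primes => |D| * (p : ℝ) ^ (-2 : ℝ) :=
      (Nat.Primes.summable_rpow.2 (by norm_num)).mul_left _
    have hpow : ∀ p : Nat.Primes, ((p : ℝ) ^ (-s)) ^ 2 ≤ (p : ℝ) ^ (-2 : ℝ) := fun p => by
      rw [← Real.rpow_mul_natCast p.1.cast_nonneg]
      exact Real.rpow_le_rpow_of_exponent_le (mod_cast p.2.one_lt.le) (by push_cast; linarith)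
    have hre : ∀ p : Nat.Primes, (f p * (p : ℂ) ^ (-s : ℂ)).re = (f p).re * (p : ℝ) ^ (-s) :=
      fun p => by rw [natCast_cpow_neg_ofReal, Complex.re_mul_ofReal]
    simp only [primeSum, ← hre]
    refine abs_log_norm_sub_tsum_re_le_of_hasProd (hL s hs) (fun p => (hE s hs p).1) hz hu
      fun p => (hE s hs p).2.trans ?_
    gcongr
    exacts [le_abs_self D, hpow p]
  refine ⟨fun s hs => (hbound s hs).1,
    .of_bound (∑' p : Nat.Primes, |D| * (p : ℝ) ^ (-2 : ℝ)) ?_⟩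
  filter_upwards [self_mem_nhdsWithin] with s hs
  simpa only [Pi.one_apply, norm_one, mul_one, Real.norm_eq_abs] using (hbound s hs).2

end EulerProducts

section DirichletCharacters

variable {N : ℕ} (χ : DirichletCharacter ℂ N)

lemma isBigO_log_norm_LSeries_sub_primeSum :
    (fun s : ℝ => Real.log ‖LSeries (χ ·) s‖ - primeSum (fun n => (χ n).re) s)
      =O[𝓝[>] 1] (1 : ℝ → ℝ) := by
  refine (isBigO_log_norm_sub_primeSum_of_hasProd (C := 1) (D := 1)
    (E := fun s p => (1 - χ p * (p : ℂ) ^ (-s : ℂ))⁻¹) (fun p => χ.norm_le_one _)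
    (fun s hs => DirichletCharacter.LSeries_eulerProduct_hasProd χ (by simpa using hs)) ?_).2
  intro s hs p
  set z : ℂ := χ p * (p : ℂ) ^ (-s : ℂ)
  have hz : ‖z‖ ≤ (p : ℝ) ^ (-s) := by
    rw [norm_mul, natCast_cpow_neg_ofReal, Complex.norm_real,
      Real.norm_rpow_of_nonneg (Nat.cast_nonneg _), Real.norm_natCast]
    exact mul_le_of_le_one_left (by positivity) (χ.norm_le_one _)
  have hz_half : ‖z‖ ≤ 1 / 2 := calc
    ‖z‖ ≤ (p : ℝ)⁻¹ := hz.trans (natCast_rpow_neg_lt_inv p.2.one_lt hs).le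
    _ ≤ 1 / 2 := by rw [one_div]; gcongr; exact mod_cast p.2.two_le
  have hz1 : z ≠ 1 := by rintro h; norm_num [h] at hz_half
  refine ⟨inv_ne_zero (sub_ne_zero.2 hz1.symm), ?_⟩
  calc ‖Complex.log (1 - z)⁻¹ - z‖ ≤ ‖z‖ ^ 2 * (1 - ‖z‖)⁻¹ / 2 :=
        Complex.norm_log_one_sub_inv_sub_self_le (by linarith)
    _ ≤ ‖z‖ ^ 2 * (1 - 1 / 2)⁻¹ / 2 := by gcongr
    _ = ‖z‖ ^ 2 := by ring
    _ ≤ 1 * ((p : ℝ) ^ (-s)) ^ 2 := by rw [one_mul]; gcongr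

variable [NeZero N]

lemma primeSum_isBigO_one_of_ne_one (hχ : χ ≠ 1) :
    primeSum (fun n => (χ n).re) =O[𝓝[>] 1] (1 : ℝ → ℝ) := by
  have hL : (fun s : ℝ => Real.log ‖LSeries (χ ·) s‖) =O[𝓝[>] 1] (1 : ℝ → ℝ) := by
    have hcont : ContinuousAt (fun s : ℝ => Real.log ‖χ.LFunction s‖) 1 :=
      ((DirichletCharacter.differentiable_LFunction hχ).continuous.comp
        Complex.continuous_ofReal).norm.continuousAt.log
        (by simpa using DirichletCharacter.LFunction_apply_one_ne_zero hχ)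
    refine ((hcont.isBigO_one ℝ).mono nhdsWithin_le_nhds).congr' ?_ .rfl
    filter_upwards [self_mem_nhdsWithin] with s hs
    rw [χ.LFunction_eq_LSeries (by simpa using hs)]
  exact (hL.sub (isBigO_log_norm_LSeries_sub_primeSum χ)).congr_left fun s => by ring

lemma tendsto_ofReal_nhdsGT (x : ℝ) : Tendsto ((↑) : ℝ → ℂ) (𝓝[>] x) (𝓝[≠] (x : ℂ)) :=
  (Complex.continuous_ofReal.tendsto x).inf <| tendsto_principal_principal.2 fun _ hy =>
    by simpa using hy.ne'

variable (N) in
lemma primeSum_one_char_add_log_isBigO_one :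
    (fun s => primeSum (fun n => ((1 : DirichletCharacter ℂ N) n).re) s + Real.log (s - 1))
      =O[𝓝[>] 1] (1 : ℝ → ℝ) := by
  have hres : ∏ p ∈ N.primeFactors, (1 - (p : ℂ)⁻¹) ≠ 0 := Finset.prod_ne_zero_iff.2 fun p hp => by
    simpa [sub_eq_zero, eq_comm (a := (1 : ℂ))] using (Nat.prime_of_mem_primeFactors hp).one_lt.ne'
  have hL : (fun s : ℝ => Real.log (s - 1) + Real.log ‖LSeries ((1 : DirichletCharacter ℂ N) ·) s‖)
      =O[𝓝[>] 1] (1 : ℝ → ℝ) := by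
    have hlim := ((DirichletCharacter.LFunctionTrivChar_residue_one (N := N)).comp
      (tendsto_ofReal_nhdsGT 1)).norm.log (norm_ne_zero_iff.2 hres)
    refine (hlim.isBigO_one ℝ).congr' ?_ .rfl
    filter_upwards [self_mem_nhdsWithin] with s (hs : 1 < s)
    have hs' : 1 < (s : ℂ).re := by simpa using hs
    rw [Function.comp_apply, DirichletCharacter.LFunctionTrivChar,
      DirichletCharacter.LFunction_eq_LSeries _ hs', norm_mul, Real.log_mul _
        (norm_ne_zero_iff.2 (DirichletCharacter.LSeries_ne_zero_of_one_lt_re 1 hs')),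
      ← Complex.ofReal_one, ← Complex.ofReal_sub, Complex.norm_real, Real.norm_eq_abs,
      Real.log_abs]
    simpa [sub_eq_zero] using hs.ne'
  exact (hL.sub (isBigO_log_norm_LSeries_sub_primeSum 1)).congr_left fun s => by ring

lemma primeSum_one_add_log_isBigO_one :
    (fun s => primeSum 1 s + Real.log (s - 1)) =O[𝓝[>] 1] (1 : ℝ → ℝ) :=
  (primeSum_one_char_add_log_isBigO_one 1).congr_left fun s => by
    congr 2
    ext n
    simp [Subsingleton.elim (n : ZMod 1) 1]

lemma primeSum_intCast_mulChar_isBigO_one {N : ℕ} [NeZero N] {ψ : MulChar (ZMod N) ℤ}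
    (hψ : ψ ≠ 1) : primeSum (fun n => (ψ n : ℝ)) =O[𝓝[>] 1] (1 : ℝ → ℝ) := by
  simpa using primeSum_isBigO_one_of_ne_one (ψ.ringHomComp (Int.castRingHom ℂ))
    ((MulChar.ringHomComp_ne_one_iff Int.cast_injective).2 hψ)

lemma primeSum_intCast_one_mulChar_add_log_isBigO_one (N : ℕ) [NeZero N] :
    (fun s => primeSum (fun n => ((1 : MulChar (ZMod N) ℤ) n : ℝ)) s + Real.log (s - 1))
      =O[𝓝[>] 1] (1 : ℝ → ℝ) := by
  have h := primeSum_one_char_add_log_isBigO_one N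
  rw [← MulChar.ringHomComp_one (Int.castRingHom ℂ)] at h
  simpa only [MulChar.ringHomComp_apply, eq_intCast, Complex.intCast_re] using h

end DirichletCharacters

section EulerFactors

lemma norm_tsum_mul_pow_sub_le {g : ℕ → ℂ} (g_zero : g 0 = 1) (hg : ∀ k, ‖g k‖ ≤ k + 1) {z : ℂ}
    (hz : ‖z‖ ≤ 1 / 5) : ‖∑' k, g k * z ^ k - 1 - g 1 * z‖ ≤ 5 * ‖z‖ ^ 2 := by
  set x := ‖z‖
  have hx : 0 ≤ x := norm_nonneg z
  have hgeom : HasSum (fun k : ℕ => ((k : ℝ) + 1) * x ^ k) (1 / (1 - x) ^ 2) := by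
    simpa using hasSum_choose_mul_geometric_of_norm_lt_one 1 (r := x)
      (by rw [Real.norm_of_nonneg hx]; linarith)
  have hle : ∀ k, ‖g k * z ^ k‖ ≤ ((k : ℝ) + 1) * x ^ k := fun k => by
    rw [norm_mul, norm_pow]
    gcongr
    exact hg k
  have hsplit := (hgeom.summable.of_norm_bounded hle).sum_add_tsum_nat_add 2
  have hgeom_split := hgeom.summable.sum_add_tsum_nat_add 2
  rw [hgeom.tsum_eq] at hgeom_split
  simp only [Finset.sum_range_succ, Finset.sum_range_zero, g_zero] at hsplit hgeom_split
  have htail : ‖∑' k, g (k + 2) * z ^ (k + 2)‖ ≤ 1 / (1 - x) ^ 2 - 1 - 2 * x := calc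
    _ ≤ ∑' k : ℕ, (((k + 2 : ℕ) : ℝ) + 1) * x ^ (k + 2) :=
      tsum_of_norm_bounded ((summable_nat_add_iff 2).2 hgeom.summable).hasSum fun k => hle (k + 2)
    _ = 1 / (1 - x) ^ 2 - 1 - 2 * x := by
      simp only [Nat.cast_zero, Nat.cast_one] at hgeom_split
      linear_combination hgeom_split
  have hrational : 1 / (1 - x) ^ 2 - 1 - 2 * x ≤ 5 * x ^ 2 := by
    rw [sub_sub, sub_le_iff_le_add, div_le_iff₀ (by nlinarith)]
    nlinarith [mul_nonneg (pow_nonneg hx 2) (sub_nonneg.2 hz), pow_nonneg hx 3, pow_nonneg hx 4]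
  refine le_trans (le_of_eq ?_) (htail.trans hrational)
  rw [← hsplit]
  ring_nf

lemma norm_log_tsum_mul_pow_sub_le {g : ℕ → ℂ} (g_zero : g 0 = 1) (hg : ∀ k, ‖g k‖ ≤ k + 1) {z : ℂ}
    (hz : ‖z‖ ≤ 1 / 5) : ∑' k, g k * z ^ k ≠ 0 ∧
      ‖Complex.log (∑' k, g k * z ^ k) - g 1 * z‖ ≤ 17 * ‖z‖ ^ 2 := by
  have hS := norm_tsum_mul_pow_sub_le g_zero hg hz
  set S := ∑' k, g k * z ^ k
  have hg1 : ‖g 1 * z‖ ≤ 2 * ‖z‖ := by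
    rw [norm_mul]
    gcongr
    exact (hg 1).trans_eq (by norm_num)
  have hS1 : ‖S - 1‖ ≤ 3 * ‖z‖ := by
    have := norm_add_le (S - 1 - g 1 * z) (g 1 * z)
    rw [sub_add_cancel] at this
    nlinarith [norm_nonneg z]
  have hlog : ‖Complex.log S - (S - 1)‖ ≤ 12 * ‖z‖ ^ 2 := calc
    _ ≤ ‖S - 1‖ ^ 2 * (1 - ‖S - 1‖)⁻¹ / 2 := by
      simpa using Complex.norm_log_one_add_sub_self_le (z := S - 1) (by linarith)
    _ ≤ (3 * ‖z‖) ^ 2 * (1 - 3 / 5)⁻¹ / 2 := by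
      have : 1 - 3 / 5 ≤ 1 - ‖S - 1‖ := by linarith
      gcongr
    _ ≤ 12 * ‖z‖ ^ 2 := by nlinarith [sq_nonneg ‖z‖]
  refine ⟨fun h => ?_, ?_⟩
  · norm_num [h] at hS1
    linarith
  · have := norm_add_le (Complex.log S - (S - 1)) (S - 1 - g 1 * z)
    rw [sub_add_sub_cancel] at this
    linarith

end EulerFactors

section MultiplicativeFunctions

open ArithmeticFunction
open scoped ArithmeticFunction.zeta

variable {f : ArithmeticFunction ℂ}

lemma norm_le_card_divisors (hf : f.IsMultiplicative)
    (hpow : ∀ p k : ℕ, p.Prime → ‖f (p ^ k)‖ ≤ k + 1) (n : ℕ) :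
    ‖f n‖ ≤ n.divisors.card := by
  induction n using Nat.recOnPosPrimePosCoprime with
  | prime_pow p n hp _ => simpa [Nat.divisors_prime_pow hp] using hpow p n hp
  | zero => simp
  | one => simp [hf.map_one]
  | coprime a b _ _ hab iha ihb =>
    rw [hf.map_mul_of_coprime hab, norm_mul, hab.card_divisors_mul, Nat.cast_mul]
    gcongr

lemma LSeriesSummable_of_norm_prime_pow_le (hf : f.IsMultiplicative)
    (hpow : ∀ p k : ℕ, p.Prime → ‖f (p ^ k)‖ ≤ k + 1) {s : ℂ}
    (hs : 1 < s.re) : LSeriesSummable (f ·) s := by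
  have hζ : LSeriesSummable (fun n => (ζ : ArithmeticFunction ℂ) n) s :=
    LSeriesSummable_zeta_iff.2 hs
  refine .of_norm_bounded (LSeriesSummable_mul hζ hζ).norm fun n => LSeries.norm_term_le s ?_
  have hdiv : ((ζ : ArithmeticFunction ℂ) * (ζ : ArithmeticFunction ℂ)) n = n.divisors.card := by
    rw [coe_zeta_mul_apply, Finset.cast_card]
    refine Finset.sum_congr rfl fun i hi => ?_
    simp [(Nat.pos_of_mem_divisors hi).ne']
  rw [hdiv, Complex.norm_natCast]
  exact norm_le_card_divisors hf hpow n

lemma hasProd_LSeries_of_norm_prime_pow_le (hf : f.IsMultiplicative)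
    (hpow : ∀ p k : ℕ, p.Prime → ‖f (p ^ k)‖ ≤ k + 1) {s : ℂ}
    (hs : 1 < s.re) :
    HasProd (fun p : Nat.Primes => ∑' k, f (p ^ k) * ((p : ℂ) ^ (-s)) ^ k) (LSeries (f ·) s) := by
  have hterm : ∀ n, LSeries.term (f ·) s n = f n * (n : ℂ) ^ (-s) :=
    LSeries.term_def₀ f.map_zero s
  have hprod := EulerProduct.eulerProduct_hasProd (f := LSeries.term (f ·) s)
    (by simp [hf.map_one])
    (fun {m n} hmn => by
      simp only [hterm, hf.map_mul_of_coprime hmn]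
      rw [Nat.cast_mul, Complex.natCast_mul_natCast_cpow]
      ring)
    (LSeriesSummable_of_norm_prime_pow_le hf hpow hs).norm (LSeries.term_zero ..)
  refine hprod.congr_fun fun p => tsum_congr fun k => ?_
  rw [hterm, Nat.cast_pow, ← Complex.natCast_cpow_natCast_mul, Complex.cpow_nat_mul]

lemma isBigO_log_norm_LSeries_sub_primeSum_of_isMultiplicative (hf : f.IsMultiplicative)
    (hpow : ∀ p k : ℕ, p.Prime → ‖f (p ^ k)‖ ≤ k + 1)
    (hsupp : ∀ n : ℕ, ¬ n.Coprime 6 → f n = 0) :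
    (∀ s : ℝ, 1 < s → LSeries (f ·) s ≠ 0) ∧
      (fun s : ℝ => Real.log ‖LSeries (f ·) s‖ - primeSum (fun n => (f n).re) s)
        =O[𝓝[>] 1] (1 : ℝ → ℝ) := by
  refine isBigO_log_norm_sub_primeSum_of_hasProd (C := 2) (D := 17)
    (fun p => by simpa [one_add_one_eq_two] using hpow p 1 p.2)
    (fun s hs => hasProd_LSeries_of_norm_prime_pow_le hf hpow (by simpa using hs)) fun s hs p => ?_
  have hz : ‖(p : ℂ) ^ (-s : ℂ)‖ = (p : ℝ) ^ (-s) := by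
    rw [natCast_cpow_neg_ofReal, Complex.norm_real,
      Real.norm_rpow_of_nonneg (Nat.cast_nonneg _), Real.norm_natCast]
  by_cases hp : (p : ℕ).Coprime 6
  · have hp5 : 5 ≤ (p : ℕ) := p.2.five_le_of_ne_two_of_ne_three
      (fun h => absurd (h ▸ hp) (by decide)) (fun h => absurd (h ▸ hp) (by decide))
    have hz5 : ‖(p : ℂ) ^ (-s : ℂ)‖ ≤ 1 / 5 := calc
      _ ≤ (p : ℝ)⁻¹ := hz.trans_le (natCast_rpow_neg_lt_inv p.2.one_lt hs).le
      _ ≤ 1 / 5 := by rw [one_div]; gcongr; exact mod_cast hp5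
    simpa [hz] using norm_log_tsum_mul_pow_sub_le (g := fun k => f (p ^ k)) (by simp [hf.map_one])
      (fun k => hpow p k p.2) hz5
  · have hfactor : ∑' k, f (p ^ k) * ((p : ℂ) ^ (-s : ℂ)) ^ k = 1 := by
      rw [tsum_eq_single 0 fun k hk => ?_]
      · simp [hf.map_one]
      · rw [hsupp _ (by rwa [Nat.coprime_pow_left_iff (Nat.pos_of_ne_zero hk)]), zero_mul]
    rw [hfactor, hsupp p hp, Complex.log_one, zero_mul, sub_zero, norm_zero]
    exact ⟨one_ne_zero, by positivity⟩

end MultiplicativeFunctions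

section SummatoryBounds

variable {f : ℕ → ℂ} {r : ℝ}

lemma differentiableAt_mellin_sum_floor (hr : 0 ≤ r)
    (hO : (fun n : ℕ => ∑ k ∈ Finset.Icc 1 n, f k) =O[atTop] fun n => (n : ℝ) ^ r) {s : ℂ}
    (hs : r < s.re) :
    DifferentiableAt ℂ (fun w => mellin (fun t : ℝ => ∑ k ∈ Finset.Icc 1 ⌊t⌋₊, f k) (-w)) s := by
  set S : ℝ → ℂ := fun t => ∑ k ∈ Finset.Icc 1 ⌊t⌋₊, f k
  have hloc : MeasureTheory.LocallyIntegrableOn S (Set.Ioi 0) := by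
    have := locallyIntegrableOn_mul_sum_Icc f (m := 1) le_rfl (g := fun _ : ℝ => (1 : ℂ))
      ((MeasureTheory.locallyIntegrable_const 1).locallyIntegrableOn _)
    simpa only [one_mul] using this.mono_set Set.Ioi_subset_Ici_self
  have htop : S =O[atTop] fun t : ℝ => t ^ (-(-r)) := by
    rw [neg_neg]
    exact (hO.comp_tendsto tendsto_nat_floor_atTop).trans
      (Asymptotics.isEquivalent_nat_floor.isBigO.rpow hr (eventually_ge_atTop 0))
  have hbot : S =O[𝓝[>] 0] fun t : ℝ => t ^ (-(-s.re - 1)) := by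
    refine (Asymptotics.isBigO_zero _ _).congr' ?_ .rfl
    filter_upwards [Ioo_mem_nhdsGT one_pos] with t ht
    simp [S, Nat.floor_eq_zero.2 ht.2]
  have hmellin : DifferentiableAt ℂ (mellin S) (-s) :=
    mellin_differentiableAt_of_isBigO_rpow hloc htop (by simpa using hs) hbot (by simp)
  exact hmellin.comp s differentiableAt_id.neg

lemma LSeries_eq_mul_mellin_sum_floor (hr : 0 ≤ r)
    (hO : (fun n : ℕ => ∑ k ∈ Finset.Icc 1 n, f k) =O[atTop] fun n => (n : ℝ) ^ r) {s : ℂ}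
    (hs : r < s.re) (hf : LSeriesSummable f s) :
    LSeries f s = s * mellin (fun t : ℝ => ∑ k ∈ Finset.Icc 1 ⌊t⌋₊, f k) (-s) := by
  rw [LSeries_eq_mul_integral f hr hs hf hO, mellin, ← MeasureTheory.integral_Ici_eq_integral_Ioi,
    ← MeasureTheory.setIntegral_eq_of_subset_of_forall_sdiff_eq_zero measurableSet_Ioi
      (Set.Ici_subset_Ioi.2 one_pos) fun t ht => ?_]
  · simp_rw [neg_add', smul_eq_mul, mul_comm]
  · simp [Nat.floor_eq_zero.2 (lt_of_not_ge ht.2 : t < 1)]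

lemma exists_LSeries_sub_isBigO_sub_one (hr : 0 ≤ r) (hr1 : r < 1)
    (hO : (fun n : ℕ => ∑ k ∈ Finset.Icc 1 n, f k) =O[atTop] fun n => (n : ℝ) ^ r)
    (hf : ∀ s : ℝ, 1 < s → LSeriesSummable f s) :
    ∃ l : ℂ, (fun s : ℝ => LSeries f s - l) =O[𝓝[>] 1] fun s => s - 1 := by
  set F : ℂ → ℂ := fun s => s * mellin (fun t : ℝ => ∑ k ∈ Finset.Icc 1 ⌊t⌋₊, f k) (-s)
  have hF : DifferentiableAt ℂ F 1 :=
    differentiableAt_id.mul (differentiableAt_mellin_sum_floor hr hO (by simpa using hr1))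
  refine ⟨F 1, ?_⟩
  have hsub : (fun s : ℝ => F s - F 1) =O[𝓝[>] 1] fun s : ℝ => s - 1 := by
    have hofReal := Complex.continuous_ofReal.tendsto' (1 : ℝ) 1 Complex.ofReal_one
    refine ((hF.isBigO_sub.comp_tendsto hofReal).mono nhdsWithin_le_nhds).trans
      (.of_bound 1 (.of_forall fun s => ?_))
    simp [← Complex.ofReal_one, ← Complex.ofReal_sub]
  refine hsub.congr' ?_ .rfl
  filter_upwards [self_mem_nhdsWithin] with s (hs : 1 < s)
  rw [LSeries_eq_mul_mellin_sum_floor hr hO (by simpa using hr1.trans hs) (hf s hs)]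

end SummatoryBounds

section LogAsymptotics

lemma tendsto_log_sub_one_nhdsGT : Tendsto (fun s : ℝ => Real.log (s - 1)) (𝓝[>] 1) atBot := by
  refine Real.tendsto_log_nhdsGT_zero.comp ?_
  refine tendsto_nhdsWithin_iff.2 ⟨?_, ?_⟩
  · exact ((continuous_sub_right (1 : ℝ)).tendsto' 1 0 (sub_self 1)).mono_left nhdsWithin_le_nhds
  · filter_upwards [self_mem_nhdsWithin] with s (hs : 1 < s) using sub_pos.2 hs

lemma tendsto_div_log_of_sub_mul_log_isBigO_one {T : ℝ → ℝ} {c : ℝ}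
    (hT : (fun s => T s - c * Real.log (s - 1)) =O[𝓝[>] 1] (1 : ℝ → ℝ)) :
    Tendsto (fun s => T s / Real.log (s - 1)) (𝓝[>] 1) (𝓝 c) := by
  have hlittle := hT.trans_isLittleO <| (Asymptotics.isLittleO_const_left (c := (1 : ℝ))).2 <|
    .inr <| tendsto_abs_atBot_atTop.comp tendsto_log_sub_one_nhdsGT
  have hlim := hlittle.tendsto_div_nhds_zero.add_const c
  rw [zero_add] at hlim
  refine hlim.congr' ?_
  filter_upwards [tendsto_log_sub_one_nhdsGT.eventually_ne_atBot 0] with s hs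
  field_simp
  ring

lemma tendsto_div_of_sub_mul_log_isBigO_one {T P : ℝ → ℝ} {c d : ℝ} (hd : d ≠ 0)
    (hT : (fun s => T s - c * Real.log (s - 1)) =O[𝓝[>] 1] (1 : ℝ → ℝ))
    (hP : (fun s => P s - d * Real.log (s - 1)) =O[𝓝[>] 1] (1 : ℝ → ℝ)) :
    Tendsto (fun s => T s / P s) (𝓝[>] 1) (𝓝 (c / d)) := by
  refine ((tendsto_div_log_of_sub_mul_log_isBigO_one hT).div
    (tendsto_div_log_of_sub_mul_log_isBigO_one hP) hd).congr' ?_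
  filter_upwards [tendsto_log_sub_one_nhdsGT.eventually_ne_atBot 0] with s hs
  exact div_div_div_cancel_right₀ hs _ _

/-- A zero of `G` at `1` would force `log ‖G s‖ ≤ log (s - 1) + O(1)`. -/
lemma log_norm_isBigO_one_of_sub_isBigO_sub_one {G : ℝ → ℂ} {T : ℝ → ℝ} {l : ℂ} {κ : ℝ}
    (hG : (fun s => G s - l) =O[𝓝[>] 1] fun s => s - 1) (hG0 : ∀ s > 1, G s ≠ 0) (hκ : κ < 1)
    (hT : ∀ s, 0 ≤ T s)
    (hlog : (fun s => Real.log ‖G s‖ - (T s + κ * Real.log (s - 1))) =O[𝓝[>] 1] (1 : ℝ → ℝ)) :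
    (fun s => Real.log ‖G s‖) =O[𝓝[>] 1] (1 : ℝ → ℝ) := by
  have hl : l ≠ 0 := by
    rintro rfl
    obtain ⟨C, hC, hCbound⟩ := hG.exists_pos
    obtain ⟨B, hBbound⟩ := hlog.bound
    obtain ⟨s, hs, hle, hlower, hlim⟩ := (eventually_mem_nhdsWithin.and (hCbound.bound.and
      (hBbound.and (tendsto_log_sub_one_nhdsGT.eventually_lt_atBot
        ((-B - Real.log C) / (1 - κ)))))).exists
    have hs0 : 0 < s - 1 := sub_pos.2 hs
    rw [sub_zero, Real.norm_of_nonneg hs0.le] at hle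
    have hupper : Real.log ‖G s‖ ≤ Real.log C + Real.log (s - 1) := by
      rw [← Real.log_mul hC.ne' hs0.ne']
      exact Real.log_le_log (norm_pos_iff.2 (hG0 s hs)) hle
    rw [Pi.one_apply, norm_one, mul_one, Real.norm_eq_abs, abs_le] at hlower
    rw [lt_div_iff₀ (sub_pos.2 hκ)] at hlim
    linarith [hT s]
  have hlim : Tendsto G (𝓝[>] 1) (𝓝 l) := by
    rw [← tendsto_sub_nhds_zero_iff]
    refine hG.trans_tendsto (Tendsto.mono_left ?_ nhdsWithin_le_nhds)
    exact (continuous_sub_right (1 : ℝ)).tendsto' 1 0 (sub_self 1)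
  exact (hlim.norm.log (norm_ne_zero_iff.2 hl)).isBigO_one ℝ

end LogAsymptotics

namespace HomogElt

section Density

/-- `thetaCoeff` as a complex arithmetic function. -/
noncomputable def thetaFun : ArithmeticFunction ℂ where
  toFun n := thetaCoeff n
  map_zero' := by rw [thetaCoeff_eq_zero (by decide), Complex.ofReal_zero]

lemma thetaFun_apply (n : ℕ) : thetaFun n = thetaCoeff n := rfl

lemma isMultiplicative_thetaFun : thetaFun.IsMultiplicative :=
  ⟨by simp [thetaFun_apply, thetaCoeff_one],
    fun h => by simp only [thetaFun_apply, thetaCoeff_mul h, Complex.ofReal_mul]⟩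

lemma norm_thetaFun_prime_pow_le (p k : ℕ) (hp : p.Prime) : ‖thetaFun (p ^ k)‖ ≤ k + 1 := by
  rw [thetaFun_apply, Complex.norm_real]
  exact abs_thetaCoeff_prime_pow_le hp k

lemma three_mul_primeSum_indicator_QSet_eq {s : ℝ} (hs : 1 < s) :
    3 * primeSum (QSet.indicator 1) s = primeSum thetaCoeff s +
      (primeSum (fun n => ((1 : MulChar (ZMod 24) ℤ) n : ℝ)) s +
        primeSum (fun n => (chiNegSix n : ℝ)) s) / 2 := by
  have hθ := summable_primeSum (a := thetaCoeff) (C := 2) (fun p => by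
    simpa [one_add_one_eq_two] using abs_thetaCoeff_prime_pow_le p.2 1) hs
  have hψ : ∀ ψ : MulChar (ZMod 24) ℤ, Summable fun p : Nat.Primes => (ψ p : ℝ) * (p : ℝ) ^ (-s) :=
    fun ψ => summable_primeSum (a := fun n => (ψ n : ℝ)) (C := 1) (fun p => by
      simpa using DirichletCharacter.norm_le_one (ψ.ringHomComp (Int.castRingHom ℂ)) p) hs
  simp only [primeSum]
  rw [← tsum_mul_left, ← (hψ 1).tsum_add (hψ _), ← tsum_div_const,
    ← hθ.tsum_add (((hψ 1).add (hψ _)).div_const 2)]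
  refine tsum_congr fun p => ?_
  rw [← mul_assoc, three_mul_indicator_QSet_eq p.2]
  ring

lemma primeSum_thetaCoeff_isBigO_one : primeSum thetaCoeff =O[𝓝[>] 1] (1 : ℝ → ℝ) := by
  obtain ⟨hne, (hlog : (fun s : ℝ => Real.log ‖LSeries (thetaFun ·) s‖ - primeSum thetaCoeff s)
    =O[𝓝[>] 1] (1 : ℝ → ℝ))⟩ := isBigO_log_norm_LSeries_sub_primeSum_of_isMultiplicative
    isMultiplicative_thetaFun norm_thetaFun_prime_pow_le fun n hn => by
      rw [thetaFun_apply, thetaCoeff_eq_zero hn, Complex.ofReal_zero]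
  have hpartial : (fun n : ℕ => ∑ k ∈ Finset.Icc 1 n, thetaFun k)
      =O[atTop] fun n => (n : ℝ) ^ (1 / 2 : ℝ) := by
    simp only [thetaFun_apply, ← Complex.ofReal_sum]
    exact Complex.isBigO_ofReal_left.2 isBigO_sum_thetaCoeff
  obtain ⟨l, hl⟩ := exists_LSeries_sub_isBigO_sub_one (by norm_num) (by norm_num) hpartial
    fun s hs => LSeriesSummable_of_norm_prime_pow_le isMultiplicative_thetaFun
      norm_thetaFun_prime_pow_le (by simpa using hs)
  have hQ_nonneg : ∀ s, 0 ≤ 3 * primeSum (QSet.indicator 1) s := fun s =>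
    mul_nonneg zero_le_three <| tsum_nonneg fun p => mul_nonneg
      (Set.indicator_nonneg (fun _ _ => zero_le_one) _) (by positivity)
  have hL : (fun s : ℝ => Real.log ‖LSeries (thetaFun ·) s‖) =O[𝓝[>] 1] (1 : ℝ → ℝ) := by
    refine log_norm_isBigO_one_of_sub_isBigO_sub_one hl hne one_half_lt_one hQ_nonneg ?_
    refine ((hlog.sub ((primeSum_intCast_one_mulChar_add_log_isBigO_one 24).const_mul_left
      (1 / 2))).sub ((primeSum_intCast_mulChar_isBigO_one chiNegSix_ne_one).const_mul_left
      (1 / 2))).congr' ?_ .rfl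
    filter_upwards [self_mem_nhdsWithin] with s hs
    rw [three_mul_primeSum_indicator_QSet_eq hs]
    ring
  exact (hL.sub hlog).congr_left fun s => sub_sub_cancel _ _

lemma primeSum_indicator_QSet_add_log_isBigO_one :
    (fun s => primeSum (QSet.indicator 1) s + 1 / 6 * Real.log (s - 1))
      =O[𝓝[>] 1] (1 : ℝ → ℝ) := by
  refine (((primeSum_thetaCoeff_isBigO_one.const_mul_left (1 / 3)).add
    ((primeSum_intCast_one_mulChar_add_log_isBigO_one 24).const_mul_left (1 / 6))).add
    ((primeSum_intCast_mulChar_isBigO_one chiNegSix_ne_one).const_mul_left (1 / 6))).congr' ?_ .rfl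
  filter_upwards [self_mem_nhdsWithin] with s hs
  linear_combination -1 / 3 * three_mul_primeSum_indicator_QSet_eq hs

end Density

end HomogElt

theorem stmt_17 :
    Tendsto
      (fun s : ℝ =>
        (∑' p : QSet, ((p : ℕ) : ℝ) ^ (-s)) /
          (∑' p : {q : ℕ // q.Prime}, ((p : ℕ) : ℝ) ^ (-s)))
      (𝓝[>] (1 : ℝ)) (𝓝 (1 / 6)) := by
  have hden : ∀ s : ℝ, ∑' p : {q : ℕ // q.Prime}, ((p : ℕ) : ℝ) ^ (-s) = primeSum 1 s := fun s =>
    tsum_congr fun p => (one_mul _).symm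
  simp only [tsum_rpow_eq_primeSum_indicator fun p (hp : p ∈ QSet) => hp.1, hden]
  have := tendsto_div_of_sub_mul_log_isBigO_one (c := -(1 / 6)) (d := -1) (by norm_num)
    (HomogElt.primeSum_indicator_QSet_add_log_isBigO_one.congr_left fun s => by ring)
    (primeSum_one_add_log_isBigO_one.congr_left fun s => by ring)
  rwa [neg_div_neg_eq, div_one] at this
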